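/- A positive Gorenstein ideal in R[x_1,x_2,x_3] with socle ℓ of degree 4d does not contain a strictly positive form of degree 2d+2; i.e., if ℓ is a nonzero linear functional on R[x]_{3,4d} that is nonnegative on squares of degree-2d forms, and p in R[x]_{3,2d+2} satisfies p(x) > 0 for all nonzero x in R^3, then ℓ(pq) ≠ 0 for some q in R[x]_{3,2d-2}. -/

import Mathlib

open MvPolynomial


theorem aux_affine_nonneg (a b : ℝ) (h : ∀ t : ℝ, 0 ≤ a + t * b) : b = 0 := by
  by_contra hb
  have := h (-(a + 1) / b)
  rw [div_mul_cancel₀ _ hb] at this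
  linarith

theorem exists_sq_neg_one (B : Type*) [CommRing B] [Algebra ℝ B] [Module.Finite ℝ B]
    (h : (B →ₐ[ℝ] ℝ) → False) : ∃ j : B, j * j = -1 := by
  have : IsArtinianRing B := IsArtinianRing.of_finite ℝ B
  have key : ∀ I : MaximalSpectrum B, ∃ x : B, x * x + 1 ∈ I.asIdeal := by
    intro I
    have := I.isMaximal
    let : Field (B ⧸ I.asIdeal) := Ideal.Quotient.field I.asIdeal
    have : Algebra.IsAlgebraic ℝ (B ⧸ I.asIdeal) := Algebra.IsAlgebraic.of_finite ℝ _
    rcases Real.nonempty_algEquiv_or (B ⧸ I.asIdeal) with ⟨⟨e⟩⟩ | ⟨⟨e⟩⟩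
    · exact (h (e.toAlgHom.comp (Ideal.Quotient.mkₐ ℝ I.asIdeal))).elim
    · obtain ⟨x, hx⟩ := Ideal.Quotient.mk_surjective (e.symm Complex.I)
      refine ⟨x, ?_⟩
      rw [← Ideal.Quotient.eq_zero_iff_mem, map_add, map_mul, hx, map_one, ← map_mul]
      simp
  choose x hx using key
  let e := IsArtinianRing.quotNilradicalEquivPi B
  obtain ⟨y, hy⟩ := e.surjective (fun I => Ideal.Quotient.mk _ (x I))
  obtain ⟨z, rfl⟩ := Ideal.Quotient.mk_surjective y
  have hz : ∀ I : MaximalSpectrum B, z - x I ∈ I.asIdeal := by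
    intro I
    rw [← Ideal.Quotient.mk_eq_mk_iff_sub_mem]
    exact congrFun hy I
  have hnil : IsNilpotent (z * z + 1) := by
    rw [← mem_nilradical, IsArtinianRing.nilradical_eq_iInf, Ideal.mem_iInf]
    intro I
    have : z * z + 1 = (z - x I) * (z + x I) + (x I * x I + 1) := by ring
    rw [this]
    exact I.asIdeal.add_mem (I.asIdeal.mul_mem_right _ (hz I)) (hx I)
  have hu : IsUnit z := by
    have : IsUnit (z * z) := by
      have h1 : z * z = (z * z + 1) - 1 := by ring
      rw [h1]
      exact hnil.isUnit_sub_one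
    exact isUnit_of_mul_isUnit_left this
  obtain ⟨r, ⟨-, hr⟩, -⟩ := Polynomial.existsUnique_nilpotent_sub_and_aeval_eq_zero
    (P := (Polynomial.X ^ 2 + 1 : Polynomial ℝ)) (x := z)
    (by simpa [pow_two] using hnil)
    (by
      have h2 : IsUnit (2 : B) := by
        have := (isUnit_iff_ne_zero.2 (two_ne_zero' ℝ)).map (algebraMap ℝ B)
        rwa [map_ofNat] at this
      have e : Polynomial.aeval z (Polynomial.derivative (Polynomial.X ^ 2 + 1 : Polynomial ℝ))
          = 2 * z := by
        rw [Polynomial.derivative_add, Polynomial.derivative_X_pow, Polynomial.derivative_one]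
        simp
        rw [map_ofNat]
      rw [e]
      exact h2.mul hu)
  refine ⟨r, ?_⟩
  have : r ^ 2 + 1 = 0 := by simpa using hr
  linear_combination this

theorem half_dim (B : Type*) [CommRing B] [Algebra ℝ B] [Module.Finite ℝ B]
    (lam : B →ₗ[ℝ] ℝ) (hnd : ∀ f, (∀ h, lam (f * h) = 0) → f = 0)
    (j : B) (hj : j * j = -1) (V : Submodule ℝ B) (hV : ∀ f ∈ V, 0 ≤ lam (f * f)) :
    2 * Module.finrank ℝ V ≤ Module.finrank ℝ B := by
  have hrad : ∀ f ∈ V, lam (f * f) = 0 → ∀ h ∈ V, lam (f * h) = 0 := by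
    intro f hf hff h hh
    have : 2 * lam (f * h) = 0 := by
      apply aux_affine_nonneg (lam (h * h))
      intro t
      have := hV (h + t • f) (V.add_mem hh (V.smul_mem t hf))
      have e : (h + t • f) * (h + t • f) = h * h + (2 * t) • (f * h) + (t * t) • (f * f) := by
        simp only [Algebra.smul_def, map_mul, map_ofNat]; ring
      rw [e] at this
      simp only [map_add, map_smul, hff, smul_eq_mul] at this
      linarith
    linarith
  let J : B →ₗ[ℝ] B := LinearMap.mulLeft ℝ j
  have hJJ : ∀ x, j * (j * x) = -x := fun x => by rw [← mul_assoc, hj]; ring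
  have hJinj : Function.Injective J := by
    intro a b hab
    have : j * (j * a) = j * (j * b) := by
      have h1 : j * a = j * b := hab
      rw [h1]
    rw [hJJ, hJJ] at this
    exact neg_injective this
  let JV := V.map J
  have hfr : Module.finrank ℝ JV = Module.finrank ℝ V :=
    (Submodule.equivMapOfInjective J hJinj V).symm.finrank_eq
  let U := V ⊓ JV
  let L : B →ₗ[ℝ] Module.Dual ℝ B :=
    LinearMap.mk₂ ℝ (fun f h => lam (f * h)) (by intros; simp [add_mul]) (by intros; simp)
      (by intros; simp [mul_add]) (by intros; simp)
  have hLinj : Function.Injective L := by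
    rw [injective_iff_map_eq_zero]
    intro f hf
    exact hnd f (fun h => LinearMap.congr_fun hf h)
  have hU : U.map L ≤ (V ⊔ JV).dualAnnihilator := by
    rintro _ ⟨f, ⟨hf1, ⟨g, hg, rfl⟩⟩, rfl⟩
    have hgf : j * g ∈ V := hf1
    have e1 : lam ((j * g) * (j * g)) = - lam (g * g) := by
      rw [← map_neg]; congr 1; linear_combination (g * g) * hj
    have p1 := hV _ hgf
    have p2 := hV _ hg
    have z1 : lam (g * g) = 0 := by linarith
    have z2 : lam ((j * g) * (j * g)) = 0 := by linarith
    rw [Submodule.mem_dualAnnihilator]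
    intro w hw
    obtain ⟨a, ha, b, hb, rfl⟩ := Submodule.mem_sup.1 hw
    obtain ⟨c, hc, rfl⟩ := hb
    change lam ((j * g) * (a + j * c)) = 0
    have e2 : (j * g) * (a + j * c) = (j * g) * a - g * c := by linear_combination (g * c) * hj
    rw [e2, map_sub, hrad _ hgf z2 a ha, hrad _ hg z1 c hc, sub_zero]
  have h1 : Module.finrank ℝ U ≤ Module.finrank ℝ (V ⊔ JV).dualAnnihilator := by
    rw [(Submodule.equivMapOfInjective L hLinj U).finrank_eq]
    exact Submodule.finrank_mono hU
  have h2 := Subspace.finrank_add_finrank_dualAnnihilator_eq (V ⊔ JV)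
  have h3 := Submodule.finrank_sup_add_finrank_inf_eq V JV
  change _ + Module.finrank ℝ U = _ at h3
  omega



theorem hom_spread_coeff (f : MvPolynomial (Fin 3) ℝ) (k : ℕ) :
    (aeval (fun i => Polynomial.C (X i : MvPolynomial (Fin 3) ℝ) * Polynomial.X) f :
      Polynomial (MvPolynomial (Fin 3) ℝ)).coeff k = homogeneousComponent k f := by
  induction f using MvPolynomial.induction_on' with
  | monomial u a =>
    rw [aeval_monomial]
    have e : (u.prod fun i n => (Polynomial.C (X i : MvPolynomial (Fin 3) ℝ) * Polynomial.X) ^ n)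
        = Polynomial.C (monomial u (1 : ℝ)) * Polynomial.X ^ u.degree := by
      simp only [mul_pow, Finsupp.prod_mul]
      congr 1
      · rw [monomial_eq, Finsupp.prod, Finsupp.prod]; simp only [← map_pow, ← map_prod, map_one, one_mul]
      · rw [Finsupp.prod, Finset.prod_pow_eq_pow_sum]; rfl
    rw [e, show algebraMap ℝ (Polynomial (MvPolynomial (Fin 3) ℝ)) a = Polynomial.C (C a) from rfl,
      ← mul_assoc, ← Polynomial.C_mul, Polynomial.coeff_C_mul_X_pow, C_mul_monomial, mul_one,
      homogeneousComponent_of_mem (isHomogeneous_monomial a rfl)]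
  | add p q hp hq => rw [map_add, Polynomial.coeff_add, hp, hq, map_add]

theorem hom_factor {u a : MvPolynomial (Fin 3) ℝ} {m : ℕ} (h : (u * a).IsHomogeneous m)
    (h0 : u * a ≠ 0) : ∃ k l, k + l = m ∧ u.IsHomogeneous k ∧ a.IsHomogeneous l := by
  let Φ : MvPolynomial (Fin 3) ℝ →ₐ[ℝ] Polynomial (MvPolynomial (Fin 3) ℝ) :=
    aeval (fun i => Polynomial.C (X i : MvPolynomial (Fin 3) ℝ) * Polynomial.X)
  have hΦ : ∀ f k, (Φ f).coeff k = homogeneousComponent k f := hom_spread_coeff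
  have hne : ∀ f, f ≠ 0 → Φ f ≠ 0 := by
    intro f hf h
    apply hf
    rw [← sum_homogeneousComponent f]
    apply Finset.sum_eq_zero
    intro i _
    rw [← hΦ, h, Polynomial.coeff_zero]
  have hprod : Φ u * Φ a = Polynomial.C (u * a) * Polynomial.X ^ m := by
    rw [← map_mul]
    ext1 k
    rw [hΦ, Polynomial.coeff_C_mul_X_pow, homogeneousComponent_of_mem h]
  have hu : u ≠ 0 := left_ne_zero_of_mul h0
  have ha : a ≠ 0 := right_ne_zero_of_mul h0
  have d1 := Polynomial.natDegree_mul (hne u hu) (hne a ha)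
  have d2 := Polynomial.natTrailingDegree_mul (hne u hu) (hne a ha)
  rw [hprod, Polynomial.natDegree_C_mul_X_pow _ _ h0] at d1
  rw [hprod, Polynomial.C_mul_X_pow_eq_monomial, Polynomial.natTrailingDegree_monomial h0] at d2
  have i1 := Polynomial.natTrailingDegree_le_natDegree (Φ u)
  have i2 := Polynomial.natTrailingDegree_le_natDegree (Φ a)
  have fin : ∀ f, (Φ f).natDegree = (Φ f).natTrailingDegree → f.IsHomogeneous (Φ f).natDegree := by
    intro f hf d hd
    have hc : (Φ f).coeff d.degree ≠ 0 := by
      rw [hΦ]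
      intro h
      apply hd
      have := congrArg (coeff d) h
      rw [coeff_homogeneousComponent] at this
      simpa using this
    have l1 := Polynomial.le_natDegree_of_ne_zero hc
    have l2 := Polynomial.natTrailingDegree_le_of_ne_zero hc
    have : d.degree = (Φ f).natDegree := by omega
    rw [← this]
    exact (congrFun (congrArg DFunLike.coe Finsupp.degree_eq_weight_one) d).symm
  exact ⟨_, _, d1.symm, fin u (by omega), fin a (by omega)⟩

theorem functional_span (l : MvPolynomial (Fin 3) ℝ →ₗ[ℝ] ℝ) (c : MvPolynomial (Fin 3) ℝ)
    (a b : ℕ) (h : ∀ f g : MvPolynomial (Fin 3) ℝ, f.IsHomogeneous a → g.IsHomogeneous b →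
      l (c * (f * g)) = 0) (q : MvPolynomial (Fin 3) ℝ) (hq : q.IsHomogeneous (a + b)) :
    l (c * q) = 0 := by
  have hq' : q ∈ homogeneousSubmodule (Fin 3) ℝ a * homogeneousSubmodule (Fin 3) ℝ b := by
    rw [← homogeneousSubmodule_one_pow (σ := Fin 3) ℝ a, ← homogeneousSubmodule_one_pow (σ := Fin 3) ℝ b,
      ← pow_add, homogeneousSubmodule_one_pow]
    exact hq
  have hle : homogeneousSubmodule (Fin 3) ℝ a * homogeneousSubmodule (Fin 3) ℝ b ≤
      LinearMap.ker (l ∘ₗ LinearMap.mulLeft ℝ c) := by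
    rw [Submodule.mul_le]
    intro f hf g hg
    exact h f g hf hg
  exact hle hq'

theorem extremal_pencil {V : Type*} [AddCommGroup V] [Module ℝ V] [FiniteDimensional ℝ V]
    (A B : V →ₗ[ℝ] V →ₗ[ℝ] ℝ) (hAs : ∀ x y, A x y = A y x) (hBs : ∀ x y, B x y = B y x)
    (hA : ∀ f, 0 ≤ A f f) (hB : ∀ w, A w w = 0 → ∀ f, B w f = 0) (hne : ∃ f, A f f ≠ 0) :
    ∃ (μ : ℝ) (f₀ : V), A f₀ f₀ ≠ 0 ∧ (∀ f, B f f ≤ μ * A f f) ∧ B f₀ f₀ = μ * A f₀ f₀ := by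
  have hrad : ∀ w, A w w = 0 → ∀ f, A w f = 0 := by
    intro w hw f
    have : 2 * A w f = 0 := by
      apply aux_affine_nonneg (A f f)
      intro t
      have := hA (f + t • w)
      simp only [map_add, map_smul, LinearMap.add_apply, LinearMap.smul_apply, smul_eq_mul, hw,
        hAs f w] at this
      linarith
    linarith
  obtain ⟨U, hU⟩ := Submodule.exists_isCompl (LinearMap.ker A)
  let b := Module.finBasis ℝ U
  let φ : (Fin (Module.finrank ℝ U) → ℝ) →ₗ[ℝ] V := U.subtype ∘ₗ b.equivFun.symm.toLinearMap
  have hφ : ∀ v, v ≠ 0 → A (φ v) (φ v) ≠ 0 := by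
    intro v hv h
    apply hv
    have h1 : φ v ∈ LinearMap.ker A := by
      rw [LinearMap.mem_ker]; ext f; exact hrad _ h f
    have h2 : φ v ∈ U := (b.equivFun.symm v).2
    have h3 : φ v = 0 := (Submodule.disjoint_def.1 hU.disjoint) _ h1 h2
    have h4 : b.equivFun.symm v = 0 := Subtype.ext h3
    exact (LinearEquiv.map_eq_zero_iff _).1 h4
  have hdec : ∀ f : V, ∃ w v, A w w = 0 ∧ f = w + φ v := by
    intro f
    have : f ∈ LinearMap.ker A ⊔ U := by rw [hU.sup_eq_top]; trivial
    obtain ⟨w, hw, u, hu, rfl⟩ := Submodule.mem_sup.1 this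
    refine ⟨w, b.equivFun ⟨u, hu⟩, ?_, ?_⟩
    · rw [LinearMap.mem_ker.1 hw]; rfl
    · simp [φ]
  have hAe : ∀ w v, A w w = 0 → A (w + φ v) (w + φ v) = A (φ v) (φ v) := by
    intro w v hw
    simp [hrad w hw, hAs _ w]
  have hBe : ∀ w v, A w w = 0 → B (w + φ v) (w + φ v) = B (φ v) (φ v) := by
    intro w v hw
    simp [hB w hw, hBs _ w]
  have hcont : ∀ C : V →ₗ[ℝ] V →ₗ[ℝ] ℝ, Continuous fun v => C (φ v) (φ v) := by
    intro C
    have : (fun v => C (φ v) (φ v)) = fun v => ∑ i, ∑ j, v i * (v j * C (φ (Pi.single j 1))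
        (φ (Pi.single i 1))) := by
      funext v
      have e : v = ∑ i, v i • (Pi.single i (1 : ℝ) : Fin (Module.finrank ℝ U) → ℝ) := by
        simpa using (pi_eq_sum_univ' v)
      conv_lhs => rw [e]
      simp only [map_sum, map_smul, LinearMap.sum_apply, LinearMap.smul_apply, smul_eq_mul, Finset.mul_sum]
    rw [this]
    fun_prop
  obtain ⟨f₁, hf₁⟩ := hne
  obtain ⟨w₁, v₁, hw₁, rfl⟩ := hdec f₁
  rw [hAe _ _ hw₁] at hf₁
  have hv₁ : v₁ ≠ 0 := by rintro rfl; simp at hf₁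
  have hnorm : ∀ v : Fin (Module.finrank ℝ U) → ℝ, v ≠ 0 → ‖v‖⁻¹ • v ∈ Metric.sphere (0 : Fin (Module.finrank ℝ U) → ℝ) 1 := by
    intro v hv
    rw [mem_sphere_zero_iff_norm, norm_smul, norm_inv, norm_norm]
    exact inv_mul_cancel₀ (norm_ne_zero_iff.2 hv)
  obtain ⟨v₀, hv₀, hmax⟩ := (isCompact_sphere (0 : Fin (Module.finrank ℝ U) → ℝ) 1).exists_isMaxOn
    ⟨_, hnorm v₁ hv₁⟩ (f := fun v => B (φ v) (φ v) / A (φ v) (φ v))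
    ((hcont B).continuousOn.div (hcont A).continuousOn (fun v hv => hφ v (by
      rintro rfl; simp at hv)))
  have hv₀' : v₀ ≠ 0 := by rintro rfl; simp at hv₀
  refine ⟨B (φ v₀) (φ v₀) / A (φ v₀) (φ v₀), φ v₀, hφ _ hv₀', ?_, ?_⟩
  · intro f
    obtain ⟨w, v, hw, rfl⟩ := hdec f
    rw [hAe _ _ hw, hBe _ _ hw]
    by_cases hv : v = 0
    · subst hv; simp
    · have := hmax (hnorm v hv)
      simp only [Set.mem_ofPred_eq, map_smul, LinearMap.smul_apply, smul_eq_mul] at this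
      have hn : ‖v‖⁻¹ ≠ 0 := inv_ne_zero (norm_ne_zero_iff.2 hv)
      rw [mul_div_mul_left _ _ hn, mul_div_mul_left _ _ hn] at this
      rwa [div_le_iff₀ (lt_of_le_of_ne (hA _) (hφ v hv).symm)] at this
  · rw [div_mul_cancel₀ _ (hφ _ hv₀')]

theorem elim_monic {A : Type*} [CommRing A] [IsDomain A] [IsIntegrallyClosed A]
    (p g : Polynomial A) (hp : p.Monic) (h : IsRelPrime p g) :
    ∃ (a b : Polynomial A) (r : A), r ≠ 0 ∧ a * p + b * g = Polynomial.C r := by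
  let K := FractionRing A
  have hinj : Function.Injective (algebraMap A K) := IsFractionRing.injective A K
  have hco : IsCoprime (p.map (algebraMap A K)) (g.map (algebraMap A K)) := by
    rw [← isRelPrime_iff_isCoprime]
    intro q hq1 hq2
    have hq0 : q ≠ 0 := ne_zero_of_dvd_ne_zero (hp.map (algebraMap A K)).ne_zero hq1
    obtain ⟨q', hq'⟩ := IsIntegrallyClosed.eq_map_mul_C_of_dvd K hp hq1
    have hlc : q.leadingCoeff ≠ 0 := Polynomial.leadingCoeff_ne_zero.2 hq0
    have hm : q'.Monic := by
      have := congrArg Polynomial.leadingCoeff hq'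
      rw [Polynomial.leadingCoeff_mul, Polynomial.leadingCoeff_C] at this
      have h1 : (q'.map (algebraMap A K)).Monic := mul_right_cancel₀ hlc (by rw [this, one_mul])
      exact Polynomial.monic_of_injective hinj h1
    have hu : IsUnit (Polynomial.C q.leadingCoeff) :=
      Polynomial.isUnit_C.2 (isUnit_iff_ne_zero.2 hlc)
    have hd : q'.map (algebraMap A K) ∣ q := ⟨_, hq'.symm⟩
    have d1 := (Polynomial.map_dvd_map _ hinj hm).1 (hd.trans hq1)
    have d2 := (Polynomial.map_dvd_map _ hinj hm).1 (hd.trans hq2)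
    have h3 := h d1 d2
    rw [← hq']
    exact (h3.map (Polynomial.mapRingHom (algebraMap A K))).mul hu
  obtain ⟨a, b, hab⟩ := hco
  obtain ⟨⟨r, hr⟩, hra⟩ := IsLocalization.integerNormalization_map_to_map (nonZeroDivisors A) a
  obtain ⟨⟨s, hs⟩, hsb⟩ := IsLocalization.integerNormalization_map_to_map (nonZeroDivisors A) b
  refine ⟨Polynomial.C s * IsLocalization.integerNormalization (nonZeroDivisors A) a,
    Polynomial.C r * IsLocalization.integerNormalization (nonZeroDivisors A) b, r * s,
    mul_ne_zero (nonZeroDivisors.ne_zero hr) (nonZeroDivisors.ne_zero hs), ?_⟩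
  apply Polynomial.map_injective _ hinj
  simp only [Polynomial.map_add, Polynomial.map_mul, hra, hsb, Polynomial.map_C]
  simp only [Algebra.smul_def, Polynomial.algebraMap_apply, map_mul]
  linear_combination (Polynomial.C (algebraMap A K r) * Polynomial.C (algebraMap A K s)) * hab

theorem elim_line (p g : MvPolynomial (Fin 3) ℝ) (m : ℕ) (hp : p.IsHomogeneous m)
    (hp1 : eval ![1, 0, 0] p ≠ 0) (hrel : IsRelPrime p g) :
    ∃ s t : ℝ, t ≠ 0 ∧
      IsCoprime (aeval ![Polynomial.X, Polynomial.C s, Polynomial.C t] p : Polynomial ℝ)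
        (aeval ![Polynomial.X, Polynomial.C s, Polynomial.C t] g) := by
  let E := finSuccEquiv ℝ 2
  have hdeg : (E p).natDegree ≤ m := by
    rw [natDegree_finSuccEquiv]
    exact (degreeOf_le_totalDegree _ _).trans hp.totalDegree_le
  have hlow : ∀ i, i < m → eval (0 : Fin 2 → ℝ) ((E p).coeff i) = 0 := by
    intro i hi
    have := hp.finSuccEquiv_coeff_isHomogeneous i (m - i) (by omega)
    rw [eval_zero, constantCoeff_eq]
    apply this.coeff_eq_zero
    simp; omega
  obtain ⟨c, hc⟩ : ∃ c : ℝ, (E p).coeff m = C c := by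
    have := hp.finSuccEquiv_coeff_isHomogeneous m 0 (by omega)
    rw [← totalDegree_zero_iff_isHomogeneous, totalDegree_eq_zero_iff_eq_C] at this
    exact ⟨_, this⟩
  have hc0 : c ≠ 0 := by
    rintro rfl
    apply hp1
    have e : (![1, 0, 0] : Fin 3 → ℝ) = Fin.cons 1 0 := by
      ext i; fin_cases i <;> rfl
    rw [e, eval_eq_eval_mv_eval', Polynomial.eval_map, Polynomial.eval₂_eq_sum_range]
    apply Finset.sum_eq_zero
    intro i hi
    rw [Finset.mem_range] at hi
    rcases lt_or_eq_of_le (show i ≤ m by change i < (E p).natDegree + 1 at hi; omega) with h | h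
    · have := hlow i h
      change eval 0 ((E p).coeff i) * _ = 0
      rw [this, zero_mul]
    · subst h
      change eval 0 ((E p).coeff i) * _ = 0
      rw [hc]; simp
  have hunit : IsUnit (Polynomial.C (C c⁻¹) : Polynomial (MvPolynomial (Fin 2) ℝ)) :=
    Polynomial.isUnit_C.2 ((isUnit_iff_ne_zero.2 (inv_ne_zero hc0)).map C)
  have hmon : (Polynomial.C (C c⁻¹) * E p).Monic := by
    apply Polynomial.monic_of_natDegree_le_of_coeff_eq_one m
    · exact (Polynomial.natDegree_C_mul_le _ _).trans hdeg
    · rw [Polynomial.coeff_C_mul, hc, ← C_mul, inv_mul_cancel₀ hc0, C_1]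
  have hrel' : IsRelPrime (Polynomial.C (C c⁻¹) * E p) (E g) := by
    intro q h1 h2
    rw [hunit.dvd_mul_left] at h1
    have h3 : IsUnit (E.symm q) := hrel
      (by simpa using map_dvd E.symm h1) (by simpa using map_dvd E.symm h2)
    simpa using h3.map E
  obtain ⟨a, b, r, hr, hab⟩ := elim_monic _ _ hmon hrel'
  obtain ⟨x, hx⟩ : ∃ x : Fin 2 → ℝ, eval x (r * X 1) ≠ 0 := by
    by_contra! h
    have : r * X 1 = 0 := MvPolynomial.funext (fun x => by rw [h x, map_zero])
    exact mul_ne_zero hr (X_ne_zero _) this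
  rw [map_mul, eval_X] at hx
  refine ⟨x 0, x 1, right_ne_zero_of_mul hx, ?_⟩
  have hev : ∀ f : MvPolynomial (Fin 3) ℝ,
      (aeval ![Polynomial.X, Polynomial.C (x 0), Polynomial.C (x 1)] f : Polynomial ℝ)
        = Polynomial.map (eval x) (E f) := by
    intro f
    induction f using MvPolynomial.induction_on with
    | C a => simp [E, Polynomial.algebraMap_apply, finSuccEquiv_apply]
    | add p q hp hq => simp [hp, hq]
    | mul_X p i hp =>
      rw [map_mul, map_mul, Polynomial.map_mul, hp]
      congr 1
      fin_cases i
      · have : E (X 0) = Polynomial.X := finSuccEquiv_X_zero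
        simp [this]
      · have : E (X 1) = Polynomial.C (X 0) := finSuccEquiv_X_succ (j := 0)
        simp [this]
      · have : E (X 2) = Polynomial.C (X 1) := finSuccEquiv_X_succ (j := 1)
        simp [this]
  rw [hev, hev]
  have h2 := congrArg (Polynomial.map (eval x)) hab
  simp only [Polynomial.map_add, Polynomial.map_mul, Polynomial.map_C, eval_C] at h2
  have hrx := left_ne_zero_of_mul hx
  refine ⟨Polynomial.C (eval x r)⁻¹ * (a.map (eval x) * Polynomial.C c⁻¹),
    Polynomial.C (eval x r)⁻¹ * b.map (eval x), ?_⟩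
  have h3 : Polynomial.C (eval x r)⁻¹ * Polynomial.C (eval x r) = 1 := by
    rw [← Polynomial.C_mul, inv_mul_cancel₀ hrx, Polynomial.C_1]
  linear_combination Polynomial.C (eval x r)⁻¹ * h2 + h3

/-- restriction to the line at infinity -/
noncomputable def etaMap : MvPolynomial (Fin 3) ℝ →ₐ[ℝ] Polynomial ℝ :=
  aeval ![0, 1, Polynomial.X]

/-- homogenization of a univariate polynomial of degree at most `k` -/
noncomputable def psiMap (k : ℕ) : Polynomial ℝ →ₗ[ℝ] MvPolynomial (Fin 3) ℝ :=
  ∑ i ∈ Finset.range (k + 1), (Polynomial.lcoeff ℝ i).smulRight (X 1 ^ (k - i) * X 2 ^ i)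

theorem psiMap_apply (k : ℕ) (q : Polynomial ℝ) :
    psiMap k q = ∑ i ∈ Finset.range (k + 1), q.coeff i • (X 1 ^ (k - i) * X 2 ^ i) := by
  simp [psiMap]

theorem psiMap_hom (k : ℕ) (q : Polynomial ℝ) : (psiMap k q).IsHomogeneous k := by
  rw [psiMap_apply, ← mem_homogeneousSubmodule]
  apply Submodule.sum_mem
  intro i hi
  apply Submodule.smul_mem
  rw [mem_homogeneousSubmodule]
  have := (isHomogeneous_X_pow (R := ℝ) (1 : Fin 3) (k - i)).mul
    (isHomogeneous_X_pow (R := ℝ) (2 : Fin 3) i)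
  rwa [Nat.sub_add_cancel (by simp at hi; omega)] at this

theorem etaMap_psiMap (k : ℕ) (q : Polynomial ℝ) (hq : q.natDegree ≤ k) :
    etaMap (psiMap k q) = q := by
  rw [psiMap_apply, map_sum]
  conv_rhs => rw [q.as_sum_range' (k + 1) (by omega)]
  apply Finset.sum_congr rfl
  intro i _
  simp [etaMap, Polynomial.smul_eq_C_mul, Polynomial.C_mul_X_pow_eq_monomial]

theorem etaMap_decomp_monomial (k : ℕ) (u : Fin 3 →₀ ℕ) (hu : u.degree = k) (a : ℝ) :
    (etaMap (monomial u a)).natDegree ≤ k ∧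
      ∃ f', monomial u a = psiMap k (etaMap (monomial u a)) + X 0 * f' := by
  have hu' : u 0 + u 1 + u 2 = k := by
    rw [← hu, Finsupp.degree_eq_sum, Fin.sum_univ_three]
  have hm : monomial u a = C a * (X 0 ^ u 0 * X 1 ^ u 1 * X 2 ^ u 2) := by
    rw [monomial_eq, Finsupp.prod_fintype _ _ (by simp), Fin.prod_univ_three]
  have he : etaMap (monomial u a) = Polynomial.C a * (0 ^ u 0 * Polynomial.X ^ u 2) := by
    rw [hm]; simp [etaMap]
  rcases Nat.eq_zero_or_pos (u 0) with h | h
  · rw [h, pow_zero, one_mul] at he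
    constructor
    · rw [he]; exact (Polynomial.natDegree_C_mul_X_pow_le _ _).trans (by omega)
    · refine ⟨0, ?_⟩
      rw [he, psiMap_apply, Finset.sum_eq_single (u 2)]
      · rw [Polynomial.coeff_C_mul_X_pow, if_pos rfl, hm, h, smul_eq_C_mul,
          show k - u 2 = u 1 by omega]
        ring
      · intro i _ hi
        rw [Polynomial.coeff_C_mul_X_pow, if_neg hi, zero_smul]
      · intro h; simp at h; omega
  · rw [zero_pow h.ne', zero_mul, mul_zero] at he
    constructor
    · rw [he]; simp
    · refine ⟨C a * (X 0 ^ (u 0 - 1) * X 1 ^ u 1 * X 2 ^ u 2), ?_⟩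
      rw [he, map_zero, zero_add, hm]
      obtain ⟨j, hj⟩ : ∃ j, u 0 = j + 1 := ⟨u 0 - 1, by omega⟩
      rw [hj]; simp only [Nat.add_sub_cancel]; ring

theorem etaMap_decomp (k : ℕ) (f : MvPolynomial (Fin 3) ℝ) (hf : f.IsHomogeneous k) :
    (etaMap f).natDegree ≤ k ∧ ∃ f', f = psiMap k (etaMap f) + X 0 * f' := by
  have key : ∀ s : Finset (Fin 3 →₀ ℕ), (∀ u ∈ s, u.degree = k) → ∀ c : (Fin 3 →₀ ℕ) → ℝ,
      (etaMap (∑ u ∈ s, monomial u (c u))).natDegree ≤ k ∧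
      ∃ f', (∑ u ∈ s, monomial u (c u)) = psiMap k (etaMap (∑ u ∈ s, monomial u (c u))) + X 0 * f' := by
    intro s
    induction s using Finset.induction_on with
    | empty => intro _ c; exact ⟨by simp, 0, by simp⟩
    | insert u s hu ih =>
      intro h c
      obtain ⟨i1, f1, i2⟩ := ih (fun v hv => h v (Finset.mem_insert_of_mem hv)) c
      obtain ⟨j1, f2, j2⟩ := etaMap_decomp_monomial k u (h u (Finset.mem_insert_self _ _)) (c u)
      rw [Finset.sum_insert hu, map_add]
      refine ⟨(Polynomial.natDegree_add_le _ _).trans (max_le j1 i1), f2 + f1, ?_⟩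
      rw [map_add]
      linear_combination i2 + j2
  have := key f.support (fun u hu => by
    by_contra h; exact (mem_support_iff.1 hu) (hf.coeff_eq_zero h)) (fun u => coeff u f)
  rwa [support_sum_monomial_coeff] at this

theorem X0_quot_hom {k : ℕ} {f : MvPolynomial (Fin 3) ℝ} (h : (X 0 * f).IsHomogeneous k) :
    f = 0 ∨ ∃ j, j + 1 = k ∧ f.IsHomogeneous j := by
  by_cases h0 : f = 0
  · exact Or.inl h0
  right
  have hX : (X 0 : MvPolynomial (Fin 3) ℝ) ≠ 0 := X_ne_zero _
  obtain ⟨a, b, hab, ha, hb⟩ := hom_factor h (mul_ne_zero hX h0)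
  have := ha.inj_right (isHomogeneous_X ℝ (0 : Fin 3)) hX
  exact ⟨b, by omega, hb⟩

theorem etaMap_decomp' (k : ℕ) (f : MvPolynomial (Fin 3) ℝ) (hf : f.IsHomogeneous k) :
    ∃ f', f = psiMap k (etaMap f) + X 0 * f' ∧ (f' = 0 ∨ ∃ j, j + 1 = k ∧ f'.IsHomogeneous j) := by
  obtain ⟨_, f', h⟩ := etaMap_decomp k f hf
  refine ⟨f', h, X0_quot_hom ?_⟩
  rw [show X 0 * f' = f - psiMap k (etaMap f) by linear_combination -h]
  exact hf.sub (psiMap_hom _ _)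

theorem psiMap_succ (k : ℕ) (q : Polynomial ℝ) (hq : q.natDegree ≤ k) :
    psiMap (k + 1) q = X 1 * psiMap k q := by
  rw [psiMap_apply, psiMap_apply, Finset.sum_range_succ,
    Polynomial.coeff_eq_zero_of_natDegree_lt (by omega), zero_smul, add_zero, Finset.mul_sum]
  apply Finset.sum_congr rfl
  intro i hi
  simp at hi
  rw [show k + 1 - i = (k - i) + 1 by omega, mul_smul_comm]
  congr 1; ring

theorem psiMap_X_mul (k : ℕ) (q : Polynomial ℝ) :
    psiMap (k + 1) (Polynomial.X * q) = X 2 * psiMap k q := by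
  rw [psiMap_apply, psiMap_apply, Finset.sum_range_succ',
    Polynomial.mul_coeff_zero, Polynomial.coeff_X_zero, zero_mul, zero_smul, add_zero,
    Finset.mul_sum]
  apply Finset.sum_congr rfl
  intro i hi
  rw [Polynomial.coeff_X_mul, mul_smul_comm]
  simp only [Nat.add_sub_add_right]
  congr 1; ring

theorem hc_mul {p : MvPolynomial (Fin 3) ℝ} {m : ℕ} (hp : p.IsHomogeneous m)
    (a : MvPolynomial (Fin 3) ℝ) (k : ℕ) :
    homogeneousComponent k (p * a) =
      if m ≤ k then p * homogeneousComponent (k - m) a else 0 := by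
  have hpc : (aeval (fun i => Polynomial.C (X i : MvPolynomial (Fin 3) ℝ) * Polynomial.X) p :
      Polynomial (MvPolynomial (Fin 3) ℝ)) = Polynomial.C p * Polynomial.X ^ m := by
    ext1 j
    rw [hom_spread_coeff, Polynomial.coeff_C_mul_X_pow, homogeneousComponent_of_mem hp]
  rw [← hom_spread_coeff, map_mul, hpc, mul_assoc, Polynomial.coeff_C_mul,
    Polynomial.coeff_X_pow_mul']
  split_ifs
  · rw [hom_spread_coeff]
  · rw [mul_zero]

theorem span_hom_mem {p g : MvPolynomial (Fin 3) ℝ} {m n : ℕ} (hp : p.IsHomogeneous m)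
    (hg : g.IsHomogeneous n) {f : MvPolynomial (Fin 3) ℝ} (hf : f ∈ Ideal.span {p, g}) (k : ℕ) :
    ∃ a b, homogeneousComponent k f = p * a + g * b ∧ a.IsHomogeneous (k - m) ∧
      b.IsHomogeneous (k - n) ∧ (k < m → a = 0) ∧ (k < n → b = 0) := by
  obtain ⟨a, b, rfl⟩ := Ideal.mem_span_pair.1 hf
  refine ⟨if m ≤ k then homogeneousComponent (k - m) a else 0,
    if n ≤ k then homogeneousComponent (k - n) b else 0, ?_, ?_, ?_, ?_, ?_⟩
  · rw [map_add, mul_comm a, mul_comm b, hc_mul hp, hc_mul hg]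
    split_ifs <;> simp
  · split_ifs
    · exact homogeneousComponent_isHomogeneous _ _
    · exact isHomogeneous_zero _ _ _
  · split_ifs
    · exact homogeneousComponent_isHomogeneous _ _
    · exact isHomogeneous_zero _ _ _
  · intro h; rw [if_neg (by omega)]
  · intro h; rw [if_neg (by omega)]

theorem etaMap_X0 : etaMap (X 0) = 0 := by simp [etaMap]

theorem eta_zero_dvd {k : ℕ} {f : MvPolynomial (Fin 3) ℝ} (hf : f.IsHomogeneous k)
    (h : etaMap f = 0) : ∃ f', f = X 0 * f' := by
  obtain ⟨_, f', h'⟩ := etaMap_decomp k f hf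
  exact ⟨f', by rw [h', h]; simp⟩

theorem nzd_step {p g : MvPolynomial (Fin 3) ℝ} {m n : ℕ} (hp : p.IsHomogeneous m)
    (hg : g.IsHomogeneous n) (hpd : (etaMap p).natDegree = m) (hp0 : etaMap p ≠ 0)
    (hco : IsCoprime (etaMap p) (etaMap g)) {f : MvPolynomial (Fin 3) ℝ} {k : ℕ}
    (hf : f.IsHomogeneous k) (h : X 0 * f ∈ Ideal.span {p, g}) : f ∈ Ideal.span {p, g} := by
  have hX : (X 0 : MvPolynomial (Fin 3) ℝ) ≠ 0 := X_ne_zero _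
  have hXf : (X 0 * f).IsHomogeneous (k + 1) := by
    rw [add_comm]; exact (isHomogeneous_X ℝ (0 : Fin 3)).mul hf
  obtain ⟨a, b, hab, ha, hb, ha0, hb0⟩ := span_hom_mem hp hg h (k + 1)
  rw [homogeneousComponent_eq_self hXf] at hab
  have he : etaMap p * etaMap a + etaMap g * etaMap b = 0 := by
    rw [← map_mul, ← map_mul, ← map_add, ← hab, map_mul, etaMap_X0, zero_mul]
  have hd : etaMap p ∣ etaMap b := by
    apply hco.dvd_of_dvd_mul_left
    exact ⟨-etaMap a, by linear_combination he⟩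
  obtain ⟨c, hc⟩ := hd
  obtain ⟨c', hc', h1, h2⟩ : ∃ c', etaMap c' = c ∧ (b - p * c').IsHomogeneous (k + 1 - n) ∧
      (a + g * c').IsHomogeneous (k + 1 - m) := by
    by_cases hc0 : c = 0
    · exact ⟨0, by simp [hc0], by simpa using hb, by simpa using ha⟩
    · have hbne : b ≠ 0 := by
        rintro rfl
        rw [map_zero] at hc
        exact mul_ne_zero hp0 hc0 hc.symm
      have hkn : ¬ (k + 1 < n) := fun h => hbne (hb0 h)
      have d1 := (etaMap_decomp _ _ hb).1
      rw [hc, Polynomial.natDegree_mul hp0 hc0, hpd] at d1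
      refine ⟨psiMap (k + 1 - n - m) c, etaMap_psiMap _ _ (by omega), ?_, ?_⟩
      · have := hp.mul (psiMap_hom (k + 1 - n - m) c)
        rw [show m + (k + 1 - n - m) = k + 1 - n by omega] at this
        exact hb.sub this
      · have := hg.mul (psiMap_hom (k + 1 - n - m) c)
        rw [show n + (k + 1 - n - m) = k + 1 - m by omega] at this
        exact ha.add this
  obtain ⟨b', hb'⟩ := eta_zero_dvd h1 (by rw [map_sub, map_mul, hc', hc, sub_self])
  obtain ⟨a', ha'⟩ := eta_zero_dvd h2 (by
    apply mul_left_cancel₀ hp0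
    rw [map_add, map_mul, hc', mul_zero]
    linear_combination he - etaMap g * hc)
  rw [Ideal.mem_span_pair]
  refine ⟨a', b', ?_⟩
  apply mul_left_cancel₀ hX
  linear_combination -hab - p * ha' - g * hb'

theorem nzd_pow {p g : MvPolynomial (Fin 3) ℝ} {m n : ℕ} (hp : p.IsHomogeneous m)
    (hg : g.IsHomogeneous n) (hpd : (etaMap p).natDegree = m) (hp0 : etaMap p ≠ 0)
    (hco : IsCoprime (etaMap p) (etaMap g)) {f : MvPolynomial (Fin 3) ℝ} {k : ℕ}
    (hf : f.IsHomogeneous k) (j : ℕ) (h : X 0 ^ j * f ∈ Ideal.span {p, g}) :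
    f ∈ Ideal.span {p, g} := by
  induction j with
  | zero => simpa using h
  | succ j ih =>
    apply ih
    rw [pow_succ', mul_assoc] at h
    exact nzd_step hp hg hpd hp0 hco ((isHomogeneous_X_pow (0 : Fin 3) j).mul hf) h

theorem affine_to_hom {p g : MvPolynomial (Fin 3) ℝ} {m n : ℕ} (hp : p.IsHomogeneous m)
    (hg : g.IsHomogeneous n) (hpd : (etaMap p).natDegree = m) (hp0 : etaMap p ≠ 0)
    (hco : IsCoprime (etaMap p) (etaMap g)) {f : MvPolynomial (Fin 3) ℝ} {N : ℕ}
    (hf : f.IsHomogeneous N) (h : f ∈ Ideal.span {X 0 - 1, p, g}) : f ∈ Ideal.span {p, g} := by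
  obtain ⟨a, z, hz, hfz⟩ := Ideal.mem_span_insert.1 h
  set I := Ideal.span {p, g} with hI
  have hzi : ∀ i, homogeneousComponent i z ∈ I := by
    intro i
    obtain ⟨a, b, h, -⟩ := span_hom_mem hp hg hz i
    rw [h, hI, Ideal.mem_span_pair]
    exact ⟨a, b, by ring⟩
  have hfz' : f = X 0 * a - a + z := by rw [hfz]; ring
  have h0 : homogeneousComponent 0 f = - homogeneousComponent 0 a + homogeneousComponent 0 z := by
    conv_lhs => rw [hfz']
    rw [map_add, map_sub, hc_mul (isHomogeneous_X ℝ (0 : Fin 3))]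
    simp
  have hs : ∀ i, homogeneousComponent (i + 1) f = X 0 * homogeneousComponent i a
      - homogeneousComponent (i + 1) a + homogeneousComponent (i + 1) z := by
    intro i
    conv_lhs => rw [hfz']
    rw [map_add, map_sub, hc_mul (isHomogeneous_X ℝ (0 : Fin 3)), if_pos (by omega)]
    simp
  have hlow : ∀ i, i < N → homogeneousComponent i a ∈ I := by
    intro i
    induction i with
    | zero =>
      intro hi
      rw [homogeneousComponent_of_mem hf, if_neg (by omega)] at h0
      rw [show homogeneousComponent 0 a = homogeneousComponent 0 z by linear_combination h0]
      exact hzi _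
    | succ i ih =>
      intro hi
      have := hs i
      rw [homogeneousComponent_of_mem hf, if_neg (by omega)] at this
      rw [show homogeneousComponent (i + 1) a = X 0 * homogeneousComponent i a
        + homogeneousComponent (i + 1) z by linear_combination this]
      exact I.add_mem (I.mul_mem_left _ (ih (by omega))) (hzi _)
  have hhigh : ∀ j, homogeneousComponent (N + j) a + X 0 ^ j * f ∈ I := by
    intro j
    induction j with
    | zero =>
      rcases Nat.eq_zero_or_pos N with h | h
      · subst h
        rw [homogeneousComponent_of_mem hf, if_pos rfl] at h0
        rw [show homogeneousComponent (0 + 0) a + X 0 ^ 0 * f = homogeneousComponent 0 z by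
          rw [h0]; ring]
        exact hzi _
      · obtain ⟨i, rfl⟩ : ∃ i, N = i + 1 := ⟨N - 1, by omega⟩
        have := hs i
        rw [homogeneousComponent_of_mem hf, if_pos rfl] at this
        rw [show homogeneousComponent (i + 1 + 0) a + X 0 ^ 0 * f = X 0 * homogeneousComponent i a
          + homogeneousComponent (i + 1) z by rw [add_zero]; linear_combination this]
        exact I.add_mem (I.mul_mem_left _ (hlow i (by omega))) (hzi _)
    | succ j ih =>
      have := hs (N + j)
      rw [homogeneousComponent_of_mem hf, if_neg (by omega)] at this
      rw [show homogeneousComponent (N + (j + 1)) a + X 0 ^ (j + 1) * f = X 0 * (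
        homogeneousComponent (N + j) a + X 0 ^ j * f) + homogeneousComponent (N + j + 1) z by
          rw [← add_assoc]; linear_combination this]
      exact I.add_mem (I.mul_mem_left _ ih) (hzi _)
  have hlast := hhigh (a.totalDegree + 1)
  rw [homogeneousComponent_eq_zero _ _ (by omega), zero_add] at hlast
  exact nzd_pow hp hg hpd hp0 hco hf _ hlast

theorem exists_lambda {p g : MvPolynomial (Fin 3) ℝ} {m n : ℕ} (hp : p.IsHomogeneous m)
    (hg : g.IsHomogeneous n) (hpd : (etaMap p).natDegree = m) (hp0 : etaMap p ≠ 0)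
    (hco : IsCoprime (etaMap p) (etaMap g)) (l : MvPolynomial (Fin 3) ℝ →ₗ[ℝ] ℝ) 
    (hlp : ∀ k q, k + m = 2 * n → q.IsHomogeneous k → l (p * q) = 0)
    (hlg : ∀ h, h.IsHomogeneous n → l (g * h) = 0) :
    ∃ lam : MvPolynomial (Fin 3) ℝ →ₗ[ℝ] ℝ, (∀ f, f.IsHomogeneous (2 * n) → lam f = l f) ∧
      ∀ f ∈ Ideal.span {X 0 - 1, p, g}, lam f = 0 := by
  let J : Submodule ℝ (MvPolynomial (Fin 3) ℝ) := 
    (Ideal.span {X 0 - 1, p, g} : Ideal (MvPolynomial (Fin 3) ℝ)).restrictScalars ℝ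
  let S := homogeneousSubmodule (Fin 3) ℝ (2 * n)
  let φ := J.mkQ ∘ₗ S.subtype
  have hmem : l ∘ₗ S.subtype ∈ LinearMap.range φ.dualMap := by
    rw [LinearMap.range_dualMap_eq_dualAnnihilator_ker, Submodule.mem_dualAnnihilator]
    rintro ⟨f, hf⟩ hfk
    have hf' : f.IsHomogeneous (2 * n) := hf
    have hfJ : f ∈ Ideal.span {X 0 - 1, p, g} := by
      have : J.mkQ f = 0 := hfk
      rw [Submodule.mkQ_apply, Submodule.Quotient.mk_eq_zero] at this
      exact this
    have h1 := affine_to_hom hp hg hpd hp0 hco hf' hfJ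
    obtain ⟨a, b, hab, ha, hb, ha0, hb0⟩ := span_hom_mem hp hg h1 (2 * n)
    rw [homogeneousComponent_eq_self hf'] at hab
    change l f = 0
    rw [hab, map_add, hlg b (by rwa [show 2 * n - n = n by omega] at hb), add_zero]
    by_cases h : 2 * n < m
    · rw [ha0 h]; simp
    · exact hlp (2 * n - m) a (by omega) ha
  obtain ⟨mu, hmu⟩ := hmem
  refine ⟨mu ∘ₗ J.mkQ, ?_, ?_⟩
  · intro f hf
    exact LinearMap.congr_fun hmu ⟨f, hf⟩
  · intro f hf
    have : J.mkQ f = 0 := by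
      rw [Submodule.mkQ_apply, Submodule.Quotient.mk_eq_zero]; exact hf
    rw [LinearMap.comp_apply, this, map_zero]

section counting

variable {B : Type*} [CommRing B] [Algebra ℝ B] (π : MvPolynomial (Fin 3) ℝ →ₐ[ℝ] B)

/-- image of the forms of degree `k` -/
noncomputable def FF (k : ℕ) : Submodule ℝ B :=
  (homogeneousSubmodule (Fin 3) ℝ k).map π.toLinearMap

/-- shifted version of `FF` -/
noncomputable def EE : ℕ → Submodule ℝ B
  | 0 => ⊥
  | k + 1 => FF π k

/-- leading forms -/
noncomputable def AA (k : ℕ) : Submodule ℝ (Polynomial ℝ) :=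
  Polynomial.degreeLT ℝ (k + 1) ⊓ (EE π k).comap (π.toLinearMap ∘ₗ psiMap k)

theorem mem_FF {k : ℕ} {f : MvPolynomial (Fin 3) ℝ} (hf : f.IsHomogeneous k) : π f ∈ FF π k :=
  ⟨f, hf, rfl⟩

instance FF_fin (k : ℕ) : Module.Finite ℝ (FF π k) := by
  have : Module.Finite ℝ (homogeneousSubmodule (Fin 3) ℝ k) :=
    Module.Finite.iff_fg.2 (homogeneousSubmodule_fg (σ := Fin 3) ℝ k)
  unfold FF
  infer_instance

instance EE_fin (k : ℕ) : Module.Finite ℝ (EE π k) := by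
  cases k with
  | zero => unfold EE; infer_instance
  | succ k => exact FF_fin π k

instance degLT_fin (k : ℕ) : Module.Finite ℝ (Polynomial.degreeLT ℝ k) :=
  Module.Finite.equiv (Polynomial.degreeLTEquiv ℝ k).symm

theorem degLT_finrank (k : ℕ) : Module.finrank ℝ (Polynomial.degreeLT ℝ k) = k := by
  rw [(Polynomial.degreeLTEquiv ℝ k).finrank_eq]; simp

theorem mem_degLT_succ {k : ℕ} {q : Polynomial ℝ} :
    q ∈ Polynomial.degreeLT ℝ (k + 1) ↔ q.natDegree ≤ k := by
  rw [Polynomial.mem_degreeLT, Polynomial.natDegree_le_iff_degree_le]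
  rw [← Order.lt_succ_iff_of_not_isMax (by simp)]
  rfl

instance AA_fin (k : ℕ) : Module.Finite ℝ (AA π k) :=
  Submodule.finiteDimensional_of_le (inf_le_left : AA π k ≤ Polynomial.degreeLT ℝ (k + 1))

theorem AA_le (k : ℕ) : Module.finrank ℝ (AA π k) ≤ k + 1 := by
  have := Submodule.finrank_mono (inf_le_left : AA π k ≤ Polynomial.degreeLT ℝ (k + 1))
  rwa [degLT_finrank] at this


theorem EE_le (hX : π (X 0) = 1) (k : ℕ) : EE π k ≤ FF π k := by
  cases k with
  | zero => exact bot_le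
  | succ k =>
    rintro _ ⟨f, hf, rfl⟩
    refine ⟨X 0 * f, ?_, by simp [hX]⟩
    have := (isHomogeneous_X ℝ (0 : Fin 3)).mul hf
    rwa [add_comm] at this

theorem FF_mono (hX : π (X 0) = 1) : Monotone (FF π) := monotone_nat_of_le_succ (fun k => EE_le π hX (k + 1))

theorem mem_AA (hX : π (X 0) = 1) {k : ℕ} {f : MvPolynomial (Fin 3) ℝ} (hf : f.IsHomogeneous k)
    (h : π f ∈ EE π k) : etaMap f ∈ AA π k := by
  refine ⟨mem_degLT_succ.2 (etaMap_decomp k f hf).1, ?_⟩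
  obtain ⟨f', h1, h2⟩ := etaMap_decomp' k f hf
  have : π (psiMap k (etaMap f)) = π f - π f' := by
    conv_rhs => rw [h1]
    simp [hX]
  change π (psiMap k (etaMap f)) ∈ EE π k
  rw [this]
  apply Submodule.sub_mem _ h
  rcases h2 with rfl | ⟨j, rfl, hj⟩
  · simp
  · exact mem_FF π hj

theorem EE_mul {k : ℕ} {b : B} (hb : b ∈ EE π k) (i : Fin 3) : π (X i) * b ∈ EE π (k + 1) := by
  cases k with
  | zero =>
    have : b = 0 := hb
    rw [this, mul_zero]; exact Submodule.zero_mem _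
  | succ k =>
    obtain ⟨f, hf, rfl⟩ := hb
    refine ⟨X i * f, ?_, by simp⟩
    have := (isHomogeneous_X ℝ i).mul hf
    rwa [add_comm] at this

theorem AA_mono_succ (k : ℕ) : AA π k ≤ AA π (k + 1) := by
  rintro q ⟨h1, h2⟩
  have h1' := mem_degLT_succ.1 h1
  refine ⟨mem_degLT_succ.2 (by omega), ?_⟩
  change π (psiMap (k + 1) q) ∈ EE π (k + 1)
  rw [psiMap_succ k q h1', map_mul]
  exact EE_mul π h2 1

theorem AA_X_mul {k : ℕ} {q : Polynomial ℝ} (hq : q ∈ AA π k) :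
    Polynomial.X * q ∈ AA π (k + 1) := by
  obtain ⟨h1, h2⟩ := hq
  have h1' := mem_degLT_succ.1 h1
  refine ⟨mem_degLT_succ.2 (Polynomial.natDegree_mul_le.trans (by
    rw [Polynomial.natDegree_X]; omega)), ?_⟩
  change π (psiMap (k + 1) (Polynomial.X * q)) ∈ EE π (k + 1)
  rw [psiMap_X_mul k q, map_mul]
  exact EE_mul π h2 2

theorem AA_growth {k : ℕ} (h : AA π k ≠ ⊥) :
    Module.finrank ℝ (AA π k) + 1 ≤ Module.finrank ℝ (AA π (k + 1)) := by
  by_contra hc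
  have he : AA π k = AA π (k + 1) :=
    Submodule.eq_of_le_of_finrank_le (AA_mono_succ π k) (by omega)
  obtain ⟨q, hq, hq0⟩ := Submodule.exists_mem_ne_zero_of_ne_bot h
  have : ∀ i : ℕ, Polynomial.X ^ i * q ∈ AA π k := by
    intro i
    induction i with
    | zero => simpa using hq
    | succ i ih => rw [he, pow_succ', mul_assoc]; exact AA_X_mul π ih
  have h2 := mem_degLT_succ.1 (this (k + 1)).1
  rw [Polynomial.natDegree_mul (pow_ne_zero _ Polynomial.X_ne_zero) hq0,
    Polynomial.natDegree_X_pow] at h2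
  omega

theorem FF_finrank (hX : π (X 0) = 1) (k : ℕ) : Module.finrank ℝ (FF π k) + Module.finrank ℝ (AA π k)
    = Module.finrank ℝ (EE π k) + (k + 1) := by
  let θ := ((EE π k).mkQ ∘ₗ π.toLinearMap ∘ₗ psiMap k).domRestrict (Polynomial.degreeLT ℝ (k + 1))
  let ρ := (EE π k).mkQ.domRestrict (FF π k)
  have r1 := LinearMap.finrank_range_add_finrank_ker θ
  have r2 := LinearMap.finrank_range_add_finrank_ker ρ
  rw [degLT_finrank] at r1
  have k1 : Module.finrank ℝ (LinearMap.ker θ) = Module.finrank ℝ (AA π k) := by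
    have : LinearMap.ker θ = (AA π k).comap (Polynomial.degreeLT ℝ (k + 1)).subtype := by
      ext ⟨q, hq⟩
      simp only [LinearMap.mem_ker, Submodule.mem_comap, AA, Submodule.mem_inf]
      change (EE π k).mkQ (π (psiMap k q)) = 0 ↔ q ∈ _ ∧ π (psiMap k q) ∈ EE π k
      rw [Submodule.mkQ_apply, Submodule.Quotient.mk_eq_zero]
      exact ⟨fun h => ⟨hq, h⟩, fun h => h.2⟩
    rw [this]
    exact (Submodule.comapSubtypeEquivOfLe inf_le_left).finrank_eq
  have k2 : Module.finrank ℝ (LinearMap.ker ρ) = Module.finrank ℝ (EE π k) := by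
    have : LinearMap.ker ρ = (EE π k).comap (FF π k).subtype := by
      ext ⟨q, hq⟩
      simp only [LinearMap.mem_ker, Submodule.mem_comap]
      change (EE π k).mkQ q = 0 ↔ q ∈ EE π k
      rw [Submodule.mkQ_apply, Submodule.Quotient.mk_eq_zero]
    rw [this]
    exact (Submodule.comapSubtypeEquivOfLe (EE_le π hX k)).finrank_eq
  have hr : LinearMap.range θ = LinearMap.range ρ := by
    ext b
    constructor
    · rintro ⟨⟨q, hq⟩, rfl⟩
      exact ⟨⟨π (psiMap k q), mem_FF π (psiMap_hom k q)⟩, rfl⟩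
    · rintro ⟨⟨_, ⟨f, hf, rfl⟩⟩, rfl⟩
      have hf' : f.IsHomogeneous k := hf
      obtain ⟨f', h1, h2⟩ := etaMap_decomp' k f hf'
      refine ⟨⟨etaMap f, mem_degLT_succ.2 (etaMap_decomp k f hf').1⟩, ?_⟩
      change (EE π k).mkQ (π (psiMap k (etaMap f))) = (EE π k).mkQ (π f)
      rw [← sub_eq_zero, ← map_sub, Submodule.mkQ_apply, Submodule.Quotient.mk_eq_zero,
        ← neg_mem_iff, neg_sub]
      have : π f - π (psiMap k (etaMap f)) = π f' := by
        conv_lhs => rw [h1]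
        simp [hX, etaMap_psiMap k _ (etaMap_decomp k f hf').1, etaMap_X0]
      rw [this]
      rcases h2 with rfl | ⟨j, rfl, hj⟩
      · simp
      · exact mem_FF π hj
  rw [hr] at r1
  omega

theorem AA_lower (hX : π (X 0) = 1) {p g : MvPolynomial (Fin 3) ℝ} {m n : ℕ} (hp : p.IsHomogeneous m)
    (hg : g.IsHomogeneous n) (hpd : (etaMap p).natDegree = m) (hp0 : etaMap p ≠ 0)
    (hco : IsCoprime (etaMap p) (etaMap g)) (hπp : π p = 0) (hπg : π g = 0) (k : ℕ)
    (hk : k < m + n) : (k + 1 - m) + (k + 1 - n) ≤ Module.finrank ℝ (AA π k) := by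
  have gen : ∀ (u : MvPolynomial (Fin 3) ℝ) (c : ℕ), u.IsHomogeneous c → π u = 0 →
      ∀ r ∈ Polynomial.degreeLT ℝ (k + 1 - c), etaMap u * r ∈ AA π k := by
    intro u c hu hu0 r hr
    by_cases hc : k < c
    · rw [show k + 1 - c = 0 by omega, Polynomial.mem_degreeLT] at hr
      have : r = 0 := by
        by_contra h
        rw [Polynomial.degree_eq_natDegree h] at hr
        exact absurd hr (by simp)
      rw [this, mul_zero]; exact Submodule.zero_mem _
    · obtain ⟨j, rfl⟩ : ∃ j, k = c + j := ⟨k - c, by omega⟩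
      rw [show c + j + 1 - c = j + 1 by omega, mem_degLT_succ] at hr
      have := mem_AA π hX (hu.mul (psiMap_hom j r)) (by
        rw [map_mul, hu0, zero_mul]; exact Submodule.zero_mem _)
      rwa [map_mul, etaMap_psiMap j r hr] at this
  let P1 := Polynomial.degreeLT ℝ (k + 1 - m)
  let P2 := Polynomial.degreeLT ℝ (k + 1 - n)
  let Φ : (P1 × P2) →ₗ[ℝ] AA π k := LinearMap.codRestrict (AA π k)
    (LinearMap.coprod (LinearMap.mulLeft ℝ (etaMap p) ∘ₗ P1.subtype)
      (LinearMap.mulLeft ℝ (etaMap g) ∘ₗ P2.subtype))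
    (by
      rintro ⟨⟨r, hr⟩, ⟨s, hs⟩⟩
      exact Submodule.add_mem _ (gen p m hp hπp r hr) (gen g n hg hπg s hs))
  have hinj : Function.Injective Φ := by
    rw [injective_iff_map_eq_zero]
    rintro ⟨⟨r, hr⟩, ⟨s, hs⟩⟩ h
    have h' : etaMap p * r + etaMap g * s = 0 := congrArg Subtype.val h
    have hd : etaMap p ∣ s := hco.dvd_of_dvd_mul_left ⟨-r, by linear_combination h'⟩
    have hs0 : s = 0 := by
      apply Polynomial.eq_zero_of_dvd_of_degree_lt hd
      rw [Polynomial.degree_eq_natDegree hp0, hpd]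
      refine lt_of_lt_of_le (Polynomial.mem_degreeLT.1 hs) ?_
      exact_mod_cast (by omega : k + 1 - n ≤ m)
    subst hs0
    have hr0 : r = 0 := by
      rw [mul_zero, add_zero] at h'
      exact (mul_eq_zero.1 h').resolve_left hp0
    subst hr0
    rfl
  have := LinearMap.finrank_le_finrank_of_injective hinj
  rwa [Module.finrank_prod, degLT_finrank, degLT_finrank] at this

end counting

theorem nat_count (n : ℕ) (a D : ℕ → ℕ) (ha : ∀ k, a k ≤ k + 1)
    (hgrow : ∀ k, a k ≠ 0 → a k + 1 ≤ a (k + 1)) (D0 : D 0 + a 0 = 1)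
    (DS : ∀ k, D (k + 1) + a (k + 1) = D k + (k + 2))
    (hb : ∀ k, n + 1 ≤ k → k ≤ 2 * n + 1 → 2 * k ≤ a k + 2 * n) :
    (∀ k, 2 * n ≤ k → D k = D (2 * n)) ∧ (2 * D n ≤ D (2 * n) → D (2 * n) = 0) := by
  have hmon : ∀ j i, a j ≠ 0 → a j + i ≤ a (j + i) := by
    intro j i h
    induction i with
    | zero => exact le_rfl
    | succ i ih =>
      have := hgrow (j + i) (by omega)
      change a j + (i + 1) ≤ a (j + i + 1)
      omega
  let h : ℕ → ℕ := fun k => k + 1 - a k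
  have hh : ∀ k, h k + a k = k + 1 := fun k => by have := ha k; simp only [h]; omega
  have hDS : ∀ k, D (k + 1) = D k + h (k + 1) := by
    intro k; have := DS k; have := hh (k + 1); omega
  have hDsum : ∀ k, D k = ∑ j ∈ Finset.range (k + 1), h j := by
    intro k
    induction k with
    | zero => have := hh 0; simp; omega
    | succ k ih => rw [Finset.sum_range_succ, ← ih, hDS]
  have hanti : ∀ j k, j ≤ k → a j ≠ 0 → h k ≤ h j := by
    intro j k hjk h0
    obtain ⟨i, rfl⟩ : ∃ i, k = j + i := ⟨k - j, by omega⟩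
    have := hmon j i h0
    have := hh j
    have := hh (j + i)
    omega
  have hfull : h (2 * n + 1) = 0 := by
    have := hb (2 * n + 1) (by omega) le_rfl
    have := hh (2 * n + 1)
    omega
  have hconst : ∀ k0, a k0 ≠ 0 → h k0 = 0 → ∀ k, k0 ≤ k + 1 → ∀ i, D (k + i) = D k := by
    intro k0 h0 h1 k hk i
    induction i with
    | zero => rfl
    | succ i ih =>
      rw [← add_assoc, hDS, ih]
      have := hanti k0 (k + i + 1) (by omega) h0
      omega
  constructor
  · intro k hk
    obtain ⟨i, rfl⟩ : ∃ i, k = 2 * n + i := ⟨k - 2 * n, by omega⟩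
    refine hconst (2 * n + 1) ?_ hfull _ le_rfl i
    have := hh (2 * n + 1)
    omega
  · intro h2
    have hcmp : ∀ j ∈ Finset.range n, h (2 * n - j) ≤ h j := by
      intro j hj
      rw [Finset.mem_range] at hj
      by_cases h0 : a j = 0
      · have := hb (2 * n - j) (by omega) (by omega)
        have := hh (2 * n - j)
        have := hh j
        omega
      · exact hanti _ _ (by omega) h0
    have hsum := Finset.sum_le_sum hcmp
    have e1 : D n = ∑ j ∈ Finset.range n, h j + h n := by
      rw [hDsum, Finset.sum_range_succ]
    have e2 : D (2 * n) = D n + ∑ j ∈ Finset.range n, h (2 * n - j) := by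
      rw [hDsum, hDsum, show 2 * n + 1 = (n + 1) + n by omega, Finset.sum_range_add]
      congr 1
      rw [← Finset.sum_range_reflect]
      apply Finset.sum_congr rfl
      intro j hj
      rw [Finset.mem_range] at hj
      congr 1
      omega
    have hn0 : h n = 0 := by omega
    have : D (n + n) = D n := hconst n (by have := hh n; omega) hn0 n (by omega) n
    rw [← two_mul] at this
    omega

theorem count_main {B : Type*} [CommRing B] [Algebra ℝ B] (π : MvPolynomial (Fin 3) ℝ →ₐ[ℝ] B)
    (hX : π (X 0) = 1) (hsurj : Function.Surjective π)
    {p g : MvPolynomial (Fin 3) ℝ} {m n : ℕ} (hn : 1 ≤ n) (hmn : m ≤ n + 2) (hp : p.IsHomogeneous m)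
    (hg : g.IsHomogeneous n) (hpd : (etaMap p).natDegree = m) (hp0 : etaMap p ≠ 0)
    (hco : IsCoprime (etaMap p) (etaMap g)) (hπp : π p = 0) (hπg : π g = 0) :
    Module.Finite ℝ B ∧ (2 * Module.finrank ℝ (FF π n) ≤ Module.finrank ℝ B →
      Module.finrank ℝ B = 0) := by
  have hgrow : ∀ k, Module.finrank ℝ (AA π k) ≠ 0 →
      Module.finrank ℝ (AA π k) + 1 ≤ Module.finrank ℝ (AA π (k + 1)) := by
    intro k h
    apply AA_growth
    intro h'
    rw [h'] at h
    simp at h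
  have hlow := AA_lower π hX hp hg hpd hp0 hco hπp hπg
  have hfull : ∀ i, m + n - 1 + i + 1 ≤ Module.finrank ℝ (AA π (m + n - 1 + i)) := by
    intro i
    induction i with
    | zero =>
      have := hlow (m + n - 1) (by omega)
      change m + n - 1 + 1 ≤ Module.finrank ℝ (AA π (m + n - 1))
      omega
    | succ i ih =>
      have := hgrow (m + n - 1 + i) (by omega)
      rw [← add_assoc]
      omega
  obtain ⟨c1, c2⟩ := nat_count n (fun k => Module.finrank ℝ (AA π k))
    (fun k => Module.finrank ℝ (FF π k)) (AA_le π) hgrow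
    (by
      have := FF_finrank π hX 0
      have h2 : Module.finrank ℝ (EE π 0) = 0 := by change Module.finrank ℝ (⊥ : Submodule ℝ B) = 0; simp
      omega)
    (fun k => by
      have := FF_finrank π hX (k + 1)
      have h2 : Module.finrank ℝ (EE π (k + 1)) = Module.finrank ℝ (FF π k) := rfl
      omega)
    (by
      intro k h1 h2
      by_cases h : k < m + n
      · have := hlow k h
        omega
      · have := hfull (k + 1 - m - n)
        rw [show m + n - 1 + (k + 1 - m - n) = k by omega] at this
        omega)
  have htop : FF π (2 * n) = ⊤ := by
    rw [eq_top_iff]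
    rintro b -
    obtain ⟨f, rfl⟩ := hsurj b
    rw [← sum_homogeneousComponent f, map_sum]
    apply Submodule.sum_mem
    intro i _
    have h1 := mem_FF π (homogeneousComponent_isHomogeneous i f)
    rcases le_total i (2 * n) with h | h
    · exact FF_mono π hX h h1
    · rw [Submodule.eq_of_le_of_finrank_le (FF_mono π hX h) (c1 i h).le]
      exact h1
  have hfin : Module.Finite ℝ B := by
    have := FF_fin π (2 * n)
    rw [htop] at this
    exact Module.Finite.equiv Submodule.topEquiv
  refine ⟨hfin, ?_⟩
  have : Module.finrank ℝ (FF π (2 * n)) = Module.finrank ℝ B := by rw [htop]; exact finrank_top ℝ B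
  simp only [this] at c2
  exact c2

theorem core_false {p g : MvPolynomial (Fin 3) ℝ} {m n : ℕ} (hn : 1 ≤ n) (hmn : m ≤ n + 2)
    (hp : p.IsHomogeneous m) (hg : g.IsHomogeneous n)
    (hpos : ∀ x : Fin 3 → ℝ, x ≠ 0 → eval x p ≠ 0)
    (hco : IsCoprime (etaMap p) (etaMap g)) (l : MvPolynomial (Fin 3) ℝ →ₗ[ℝ] ℝ)
    (hne : ∃ f, f.IsHomogeneous (2 * n) ∧ l f ≠ 0)
    (hpsd : ∀ f, f.IsHomogeneous n → 0 ≤ l (f * f))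
    (hlp : ∀ k q, k + m = 2 * n → q.IsHomogeneous k → l (p * q) = 0)
    (hlg : ∀ h, h.IsHomogeneous n → l (g * h) = 0) : False := by
  have hcm : (etaMap p).coeff m ≠ 0 := by
    obtain ⟨h1, f', h2⟩ := etaMap_decomp m p hp
    have h3 := hpos ![0, 0, 1] (by intro h; simpa using congrFun h 2)
    intro h4
    apply h3
    rw [h2, psiMap_apply]
    simp only [map_add, map_mul, eval_X, Matrix.cons_val_zero, zero_mul, add_zero, map_sum]
    apply Finset.sum_eq_zero
    intro i hi
    rw [Finset.mem_range] at hi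
    rcases Nat.lt_or_ge i m with h | h
    · simp [smul_eval, zero_pow (by omega : m - i ≠ 0)]
    · have : i = m := by omega
      subst this
      rw [h4]; simp
  have hp0 : etaMap p ≠ 0 := by intro h; rw [h] at hcm; simp at hcm
  have hpd : (etaMap p).natDegree = m :=
    le_antisymm (etaMap_decomp m p hp).1 (Polynomial.le_natDegree_of_ne_zero hcm)
  obtain ⟨lam, hlam1, hlam2⟩ := exists_lambda hp hg hpd hp0 hco l hlp hlg
  let K : Ideal (MvPolynomial (Fin 3) ℝ) :=
    { carrier := {f | ∀ h, lam (f * h) = 0}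
      add_mem' := by
        intro a b ha hb h
        rw [add_mul, map_add, ha h, hb h, add_zero]
      zero_mem' := by intro h; simp
      smul_mem' := by
        intro c a ha h
        rw [smul_eq_mul, mul_comm c a, mul_assoc]; exact ha _ }
  have hK : ∀ f ∈ Ideal.span {X 0 - 1, p, g}, f ∈ K := by
    intro f hf h
    exact hlam2 _ (Ideal.mul_mem_right _ _ hf)
  let π : MvPolynomial (Fin 3) ℝ →ₐ[ℝ] (MvPolynomial (Fin 3) ℝ ⧸ K) := Ideal.Quotient.mkₐ ℝ K
  have hsurj : Function.Surjective π := Ideal.Quotient.mkₐ_surjective ℝ K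
  have hπ0 : ∀ f, π f = 0 ↔ f ∈ K := fun f => Ideal.Quotient.eq_zero_iff_mem
  have hX : π (X 0) = 1 := by
    have : π (X 0 - 1) = 0 := (hπ0 _).2 (hK _ (Ideal.subset_span (by simp)))
    rw [map_sub, map_one] at this
    exact sub_eq_zero.1 this
  have hπp : π p = 0 := (hπ0 _).2 (hK _ (Ideal.subset_span (by simp)))
  have hπg : π g = 0 := (hπ0 _).2 (hK _ (Ideal.subset_span (by simp)))
  obtain ⟨hfin, hcount⟩ := count_main π hX hsurj hn hmn hp hg hpd hp0 hco hπp hπg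
  have hker : LinearMap.ker π.toLinearMap ≤ LinearMap.ker lam := by
    intro f hf
    have := (hπ0 f).1 hf 1
    rwa [mul_one] at this
  have hmem : lam ∈ LinearMap.range π.toLinearMap.dualMap := by
    rw [LinearMap.range_dualMap_eq_dualAnnihilator_ker, Submodule.mem_dualAnnihilator]
    exact fun f hf => hker hf
  obtain ⟨mu, hmu⟩ := hmem
  have hmu' : ∀ f, mu (π f) = lam f := fun f => LinearMap.congr_fun hmu f
  obtain ⟨j, hj⟩ := exists_sq_neg_one (MvPolynomial (Fin 3) ℝ ⧸ K) (by
    intro ev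
    let e := ev.comp π
    have h1 : ∀ f, e f = eval (fun i => e (X i)) f := by
      intro f
      have := MvPolynomial.aeval_unique e
      conv_lhs => rw [this]
      rw [aeval_eq_eval]
      rfl
    refine hpos (fun i => e (X i)) ?_ ?_
    · intro h
      have h2 := congrFun h 0
      have h3 : e (X 0) = 1 := by change ev (π (X 0)) = 1; rw [hX, map_one]
      rw [h3] at h2
      simp at h2
    · rw [← h1]
      change ev (π p) = 0
      rw [hπp, map_zero])
  have hhalf := half_dim (MvPolynomial (Fin 3) ℝ ⧸ K) mu (by
      intro b hb
      obtain ⟨f, rfl⟩ := hsurj b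
      rw [hπ0]
      intro h
      have := hb (π h)
      rwa [← map_mul, hmu'] at this) j hj (FF π n) (by
      rintro _ ⟨f, hf, rfl⟩
      have hf' : f.IsHomogeneous n := hf
      change 0 ≤ mu (π f * π f)
      rw [← map_mul, hmu', hlam1 _ (by rw [two_mul]; exact hf'.mul hf')]
      exact hpsd f hf')
  have hz := hcount hhalf
  obtain ⟨f, hf, hlf⟩ := hne
  have hsub : Subsingleton (MvPolynomial (Fin 3) ℝ ⧸ K) := Module.finrank_zero_iff.1 hz
  apply hlf
  rw [← hlam1 f hf, ← hmu', Subsingleton.elim (π f) 0, map_zero]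

theorem core_relprime {p g : MvPolynomial (Fin 3) ℝ} {m n : ℕ} (hn : 1 ≤ n) (hmn : m ≤ n + 2)
    (hp : p.IsHomogeneous m) (hg : g.IsHomogeneous n)
    (hpos : ∀ x : Fin 3 → ℝ, x ≠ 0 → eval x p ≠ 0)
    (hrel : IsRelPrime p g) (l : MvPolynomial (Fin 3) ℝ →ₗ[ℝ] ℝ)
    (hne : ∃ f, f.IsHomogeneous (2 * n) ∧ l f ≠ 0)
    (hpsd : ∀ f, f.IsHomogeneous n → 0 ≤ l (f * f))
    (hlp : ∀ k q, k + m = 2 * n → q.IsHomogeneous k → l (p * q) = 0)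
    (hlg : ∀ h, h.IsHomogeneous n → l (g * h) = 0) : False := by
  obtain ⟨s, t, ht, hco⟩ := elim_line p g m hp (hpos _ (by
    intro h; simpa using congrFun h 0)) hrel
  let σ : MvPolynomial (Fin 3) ℝ →ₐ[ℝ] MvPolynomial (Fin 3) ℝ :=
    aeval ![X 2, X 0 + C s * X 1, C t * X 1]
  let τ : MvPolynomial (Fin 3) ℝ →ₐ[ℝ] MvPolynomial (Fin 3) ℝ :=
    aeval ![X 1 - C (s / t) * X 2, C t⁻¹ * X 2, X 0]
  have hσ : ∀ {f : MvPolynomial (Fin 3) ℝ} {k : ℕ}, f.IsHomogeneous k → (σ f).IsHomogeneous k := by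
    intro f k hf
    have := hf.aeval (![X 2, X 0 + C s * X 1, C t * X 1] : Fin 3 → MvPolynomial (Fin 3) ℝ) (n := 1) (by
      intro i
      fin_cases i
      · exact isHomogeneous_X ℝ (2 : Fin 3)
      · exact (isHomogeneous_X ℝ (0 : Fin 3)).add (isHomogeneous_C_mul_X s (1 : Fin 3))
      · exact isHomogeneous_C_mul_X t (1 : Fin 3))
    rwa [one_mul] at this
  have hτ : ∀ {f : MvPolynomial (Fin 3) ℝ} {k : ℕ}, f.IsHomogeneous k → (τ f).IsHomogeneous k := by
    intro f k hf
    have := hf.aeval (![X 1 - C (s / t) * X 2, C t⁻¹ * X 2, X 0] : Fin 3 → MvPolynomial (Fin 3) ℝ) (n := 1) (by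
      intro i
      fin_cases i
      · exact (isHomogeneous_X ℝ (1 : Fin 3)).sub (isHomogeneous_C_mul_X (s / t) (2 : Fin 3))
      · exact isHomogeneous_C_mul_X t⁻¹ (2 : Fin 3)
      · exact isHomogeneous_X ℝ (0 : Fin 3))
    rwa [one_mul] at this
  have hts : ∀ f, τ (σ f) = f := by
    have : τ.comp σ = AlgHom.id ℝ _ := by
      apply MvPolynomial.algHom_ext
      intro i
      have hC : ∀ c : ℝ, τ (C c) = C c := fun c => τ.commutes c
      fin_cases i
      · simp [σ, τ]
      · simp only [σ, AlgHom.comp_apply, aeval_X, AlgHom.id_apply]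
        simp only [Fin.mk_one, Matrix.cons_val_one, Matrix.cons_val_zero, map_add, map_mul, hC]
        simp only [τ, aeval_X, Matrix.cons_val_one, Matrix.cons_val_zero]
        rw [← mul_assoc, ← C_mul, div_eq_mul_inv]
        simp
      · simp only [σ, AlgHom.comp_apply, aeval_X, AlgHom.id_apply]
        simp only [Fin.reduceFinMk, Matrix.cons_val, map_mul, hC]
        simp only [τ, aeval_X, Matrix.cons_val_one, Matrix.cons_val_zero]
        rw [← mul_assoc, ← C_mul, mul_inv_cancel₀ ht, C_1, one_mul]
    intro f
    exact AlgHom.congr_fun this f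
  have heta : ∀ f, etaMap (σ f) = aeval ![Polynomial.X, Polynomial.C s, Polynomial.C t] f := by
    have : etaMap.comp σ = aeval ![Polynomial.X, Polynomial.C s, Polynomial.C t] := by
      apply MvPolynomial.algHom_ext
      intro i
      have hC : ∀ c : ℝ, etaMap (C c) = Polynomial.C c := fun c => etaMap.commutes c
      fin_cases i <;> simp [σ, hC] <;> simp [etaMap]
    intro f
    exact AlgHom.congr_fun this f
  have heval : ∀ x f, eval x (σ f) = eval ![x 2, x 0 + s * x 1, t * x 1] f := by
    intro x f
    have : (aeval x : MvPolynomial (Fin 3) ℝ →ₐ[ℝ] ℝ).comp σ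
        = aeval ![x 2, x 0 + s * x 1, t * x 1] := by
      apply MvPolynomial.algHom_ext
      intro i
      fin_cases i <;> simp [σ]
    have h2 := AlgHom.congr_fun this f
    simpa [aeval_eq_eval] using h2
  refine core_false hn hmn (hσ hp) (hσ hg) ?_ (by rw [heta, heta]; exact hco)
    (l ∘ₗ τ.toLinearMap) ?_ ?_ ?_ ?_
  · intro x hx
    rw [heval]
    apply hpos
    intro h
    apply hx
    have h0 : x 2 = 0 := by simpa using congrFun h 0
    have h1 : x 0 + s * x 1 = 0 := by simpa using congrFun h 1
    have h2 : t * x 1 = 0 := by simpa using congrFun h 2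
    have h3 : x 1 = 0 := (mul_eq_zero.1 h2).resolve_left ht
    rw [h3, mul_zero, add_zero] at h1
    ext i
    fin_cases i
    · exact h1
    · exact h3
    · exact h0
  · obtain ⟨f, hf, hlf⟩ := hne
    exact ⟨σ f, hσ hf, by simpa [hts] using hlf⟩
  · intro f hf
    simpa using hpsd (τ f) (hτ hf)
  · intro k q hk hq
    simpa [hts] using hlp k (τ q) hk (hτ hq)
  · intro h hh
    simpa [hts] using hlg (τ h) (hτ hh)

theorem exists_complex_root {p : MvPolynomial (Fin 3) ℝ} {m : ℕ} (hm : 1 ≤ m)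
    (hp : p.IsHomogeneous m) (hpos : ∀ x : Fin 3 → ℝ, x ≠ 0 → eval x p ≠ 0) :
    ∃ z : ℂ, z.im ≠ 0 ∧ (aeval ![0, 1, z] p : ℂ) = 0 := by
  have hcm : (etaMap p).coeff m ≠ 0 := by
    obtain ⟨h1, f', h2⟩ := etaMap_decomp m p hp
    have h3 := hpos ![0, 0, 1] (by intro h; simpa using congrFun h 2)
    intro h4
    apply h3
    rw [h2, psiMap_apply]
    simp only [map_add, map_mul, eval_X, Matrix.cons_val_zero, zero_mul, add_zero, map_sum]
    apply Finset.sum_eq_zero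
    intro i hi
    rw [Finset.mem_range] at hi
    rcases Nat.lt_or_ge i m with h | h
    · simp [smul_eval, zero_pow (by omega : m - i ≠ 0)]
    · have : i = m := by omega
      subst this
      rw [h4]; simp
  have hdeg : (etaMap p).degree ≠ 0 := by
    intro h
    have h1 := Polynomial.le_natDegree_of_ne_zero hcm
    have h2 : (etaMap p).natDegree = 0 := Polynomial.natDegree_eq_of_degree_eq_some h
    omega
  obtain ⟨z, hz⟩ := IsAlgClosed.exists_aeval_eq_zero ℂ (etaMap p) hdeg
  have hcomp : ∀ f, Polynomial.aeval z (etaMap f) = (aeval ![0, 1, z] f : ℂ) := by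
    have : (Polynomial.aeval z).comp etaMap = (aeval ![0, 1, z] : MvPolynomial (Fin 3) ℝ →ₐ[ℝ] ℂ) := by
      apply MvPolynomial.algHom_ext
      intro i
      fin_cases i <;> simp [etaMap]
    intro f
    exact AlgHom.congr_fun this f
  rw [hcomp] at hz
  refine ⟨z, ?_, hz⟩
  intro him
  apply hpos ![0, 1, z.re] (by intro h; simpa using congrFun h 1)
  have e : (![0, 1, z] : Fin 3 → ℂ) = algebraMap ℝ ℂ ∘ ![0, 1, z.re] := by
    ext i
    fin_cases i
    · simp
    · simp
    · apply Complex.ext <;> simp [him]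
  rw [e, aeval_algebraMap_apply, aeval_eq_eval] at hz
  simpa using hz

/-- the kernel of the bilinear form of `l` on forms of degree `n` -/
noncomputable def WW (n : ℕ) (l : MvPolynomial (Fin 3) ℝ →ₗ[ℝ] ℝ) :
    Submodule ℝ (MvPolynomial (Fin 3) ℝ) where
  carrier := {f | f.IsHomogeneous n ∧ ∀ h, h.IsHomogeneous n → l (f * h) = 0}
  add_mem' := by
    rintro a b ⟨ha, ha'⟩ ⟨hb, hb'⟩
    refine ⟨ha.add hb, fun h hh => ?_⟩
    rw [add_mul, map_add, ha' h hh, hb' h hh, add_zero]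
  zero_mem' := ⟨isHomogeneous_zero _ _ _, fun h _ => by simp⟩
  smul_mem' := by
    rintro c a ⟨ha, ha'⟩
    refine ⟨(homogeneousSubmodule (Fin 3) ℝ n).smul_mem c ha, fun h hh => ?_⟩
    rw [smul_mul_assoc, map_smul, ha' h hh, smul_zero]

theorem mem_WW {n : ℕ} {l : MvPolynomial (Fin 3) ℝ →ₗ[ℝ] ℝ} {f : MvPolynomial (Fin 3) ℝ} :
    f ∈ WW n l ↔ f.IsHomogeneous n ∧ ∀ h, h.IsHomogeneous n → l (f * h) = 0 := Iff.rfl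

theorem WW_of_sq {n : ℕ} {l : MvPolynomial (Fin 3) ℝ →ₗ[ℝ] ℝ}
    (hpsd : ∀ f, f.IsHomogeneous n → 0 ≤ l (f * f)) {f : MvPolynomial (Fin 3) ℝ}
    (hf : f.IsHomogeneous n) (h0 : l (f * f) = 0) : f ∈ WW n l := by
  refine ⟨hf, fun h hh => ?_⟩
  have : 2 * l (f * h) = 0 := by
    apply aux_affine_nonneg (l (h * h))
    intro t
    have h1 := hpsd (h + t • f) (hh.add ((homogeneousSubmodule (Fin 3) ℝ n).smul_mem t hf))
    have e : (h + t • f) * (h + t • f) = h * h + (2 * t) • (f * h) + (t * t) • (f * f) := by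
      simp only [smul_eq_C_mul, C_mul, map_ofNat]; ring
    rw [e, map_add, map_add, map_smul, map_smul, h0] at h1
    simp only [smul_eq_mul] at h1
    linarith
  linarith

instance hs_fin (n : ℕ) : Module.Finite ℝ (homogeneousSubmodule (Fin 3) ℝ n) :=
  Module.Finite.iff_fg.2 (homogeneousSubmodule_fg (σ := Fin 3) ℝ n)

theorem WW_le (n : ℕ) (l : MvPolynomial (Fin 3) ℝ →ₗ[ℝ] ℝ) :
    WW n l ≤ homogeneousSubmodule (Fin 3) ℝ n := fun _ hf => hf.1

instance WW_fin (n : ℕ) (l : MvPolynomial (Fin 3) ℝ →ₗ[ℝ] ℝ) : Module.Finite ℝ (WW n l) :=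
  Submodule.finiteDimensional_of_le (WW_le n l)

/-- the multiplication form -/
noncomputable def bil (n : ℕ) (l : MvPolynomial (Fin 3) ℝ →ₗ[ℝ] ℝ) :
    homogeneousSubmodule (Fin 3) ℝ n →ₗ[ℝ] homogeneousSubmodule (Fin 3) ℝ n →ₗ[ℝ] ℝ :=
  ((LinearMap.mul ℝ (MvPolynomial (Fin 3) ℝ)).compr₂ l).domRestrict₁₂ _ _

theorem bil_apply (n : ℕ) (l : MvPolynomial (Fin 3) ℝ →ₗ[ℝ] ℝ)
    (f g : homogeneousSubmodule (Fin 3) ℝ n) : bil n l f g = l (f.1 * g.1) := rfl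

theorem pencil_step {n : ℕ} {l l2 : MvPolynomial (Fin 3) ℝ →ₗ[ℝ] ℝ}
    (hne : ∃ f, f.IsHomogeneous (2 * n) ∧ l f ≠ 0)
    (hpsd : ∀ f, f.IsHomogeneous n → 0 ≤ l (f * f))
    (h2 : ∀ w ∈ WW n l, ∀ h, l2 (w * h) = 0) :
    ∃ μ : ℝ, (∀ f, f.IsHomogeneous n → 0 ≤ (μ • l - l2) (f * f)) ∧
      WW n l < WW n (μ • l - l2) := by
  obtain ⟨μ, f₀, h1, h3, h4⟩ := extremal_pencil (bil n l) (bil n l2)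
    (fun x y => by rw [bil_apply, bil_apply, mul_comm])
    (fun x y => by rw [bil_apply, bil_apply, mul_comm])
    (fun f => hpsd f.1 f.2)
    (fun w hw f => h2 w.1 (WW_of_sq hpsd w.2 hw) f.1)
    (by
      by_contra! hc
      obtain ⟨f, hf, hlf⟩ := hne
      apply hlf
      have := functional_span l 1 n n (fun a b ha hb => by
        rw [one_mul]
        exact (WW_of_sq hpsd ha (hc ⟨a, ha⟩)).2 b hb) f (by rwa [← two_mul])
      rwa [one_mul] at this)
  simp only [bil_apply] at h1 h3 h4
  have hpsd' : ∀ f, f.IsHomogeneous n → 0 ≤ (μ • l - l2) (f * f) := by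
    intro f hf
    have := h3 ⟨f, hf⟩
    simp only [LinearMap.sub_apply, LinearMap.smul_apply, smul_eq_mul]
    linarith
  refine ⟨μ, hpsd', ?_⟩
  refine lt_of_le_of_ne ?_ ?_
  · intro w hw
    refine ⟨hw.1, fun h hh => ?_⟩
    rw [LinearMap.sub_apply, LinearMap.smul_apply, hw.2 h hh, h2 w hw h]
    simp
  · intro he
    have hf0 : f₀.1 ∈ WW n (μ • l - l2) := by
      apply WW_of_sq hpsd' f₀.2
      rw [LinearMap.sub_apply, LinearMap.smul_apply, smul_eq_mul]
      linarith
    rw [← he] at hf0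
    exact h1 (hf0.2 _ f₀.2)

/-- the main statement as a predicate -/
def Bad (n m : ℕ) (p : MvPolynomial (Fin 3) ℝ) (l : MvPolynomial (Fin 3) ℝ →ₗ[ℝ] ℝ) : Prop :=
  (∃ f, f.IsHomogeneous (2 * n) ∧ l f ≠ 0) ∧ (∀ f, f.IsHomogeneous n → 0 ≤ l (f * f)) ∧
  (∀ k q, k + m = 2 * n → q.IsHomogeneous k → l (p * q) = 0)

def Nice (m : ℕ) (p : MvPolynomial (Fin 3) ℝ) : Prop :=
  p.IsHomogeneous m ∧ ∀ x : Fin 3 → ℝ, x ≠ 0 → eval x p ≠ 0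

theorem hom_zero_unit {a : MvPolynomial (Fin 3) ℝ} (ha : a.IsHomogeneous 0) (h0 : a ≠ 0) :
    ∃ c : ℝ, c ≠ 0 ∧ a = C c := by
  rw [← totalDegree_zero_iff_isHomogeneous, totalDegree_eq_zero_iff_eq_C] at ha
  refine ⟨_, ?_, ha⟩
  intro h
  rw [h, C_0] at ha
  exact h0 ha

theorem nice_ne_zero {m : ℕ} {p : MvPolynomial (Fin 3) ℝ} (h : Nice m p) : p ≠ 0 := by
  rintro rfl
  exact h.2 (fun _ => 1) (by intro h; simpa using congrFun h 0) (by simp)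

theorem main_false (n : ℕ) : 1 ≤ n → ∀ m p l, m ≤ n + 2 → Nice m p → ¬ Bad n m p l := by
  induction n using Nat.strong_induction_on with
  | _ n IH =>
  intro hn m₁ p₁ l₁ hm₁ hp₁ hbad₁
  have hex : ∃ m, m ≤ n + 2 ∧ ∃ p l, Nice m p ∧ Bad n m p l := ⟨m₁, hm₁, p₁, l₁, hp₁, hbad₁⟩
  classical
  obtain ⟨m, ⟨hmn, p, l₀, hp, hl₀⟩, hmin⟩ : ∃ m, (m ≤ n + 2 ∧ ∃ p l, Nice m p ∧ Bad n m p l) ∧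
      ∀ k < m, ¬ (k ≤ n + 2 ∧ ∃ p l, Nice k p ∧ Bad n k p l) :=
    ⟨Nat.find hex, Nat.find_spec hex, fun k hk => Nat.find_min hex hk⟩
  obtain ⟨l, hl, hmax⟩ : ∃ l, Bad n m p l ∧ ∀ l', Bad n m p l' →
      Module.finrank ℝ (WW n l') ≤ Module.finrank ℝ (WW n l) := by
    let S : Set ℕ := {w | ∃ l, Bad n m p l ∧ Module.finrank ℝ (WW n l) = w}
    have hS : S.Nonempty := ⟨_, l₀, hl₀, rfl⟩
    have hB : BddAbove S := by
      refine ⟨Module.finrank ℝ (homogeneousSubmodule (Fin 3) ℝ n), ?_⟩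
      rintro w ⟨l, -, rfl⟩
      exact Submodule.finrank_mono (WW_le n l)
    obtain ⟨l, h1, h2⟩ := Nat.sSup_mem hS hB
    refine ⟨l, h1, fun l' h' => ?_⟩
    rw [h2]
    exact le_csSup hB ⟨l', h', rfl⟩
  obtain ⟨hne, hpsd, hkill⟩ := hl
  have hp0 := nice_ne_zero hp
  have hm1 : 1 ≤ m := by
    by_contra h
    obtain rfl : m = 0 := by omega
    obtain ⟨c, hc, rfl⟩ := hom_zero_unit hp.1 hp0
    obtain ⟨f, hf, hlf⟩ := hne
    have := hkill (2 * n) f (by omega) hf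
    rw [← smul_eq_C_mul, map_smul, smul_eq_mul] at this
    exact mul_ne_zero hc hlf this
  -- a form in the kernel which is not divisible by p
  obtain ⟨g, hg, hpg⟩ : ∃ g ∈ WW n l, ¬ p ∣ g := by
    by_contra! hc
    obtain ⟨z, hz, hzp⟩ := exists_complex_root hm1 hp.1 hp.2
    have prop : ∀ l2 : MvPolynomial (Fin 3) ℝ →ₗ[ℝ] ℝ, (∀ q, l2 (p * q) = 0) →
        ∃ μ : ℝ, ∀ f, f.IsHomogeneous (2 * n) → l2 f = μ * l f := by
      intro l2 hl2
      obtain ⟨μ, h1, h2⟩ := pencil_step (l2 := l2) hne hpsd (by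
        intro w hw h
        obtain ⟨a, rfl⟩ := hc w hw
        rw [mul_assoc]; exact hl2 _)
      refine ⟨μ, ?_⟩
      by_contra! hc2
      obtain ⟨f, hf, hlf⟩ := hc2
      have h3 := hmax (μ • l - l2) ⟨⟨f, hf, by
        simp only [LinearMap.sub_apply, LinearMap.smul_apply, smul_eq_mul]
        intro h; exact hlf (by linarith)⟩, h1, by
        intro k q hk hq
        rw [LinearMap.sub_apply, LinearMap.smul_apply, hkill k q hk hq, hl2]; simp⟩
      exact absurd (Submodule.finrank_lt_finrank_of_lt h2) (by omega)
    let ev : MvPolynomial (Fin 3) ℝ →ₐ[ℝ] ℂ := aeval ![0, 1, z]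
    have hevp : ev p = 0 := hzp
    obtain ⟨μ₁, h1⟩ := prop (Complex.reLm ∘ₗ ev.toLinearMap) (by intro q; simp [hevp])
    obtain ⟨μ₂, h2⟩ := prop (Complex.imLm ∘ₗ ev.toLinearMap) (by intro q; simp [hevp])
    have a1 := h1 (X 1 ^ (2 * n)) (isHomogeneous_X_pow _ _)
    have a2 := h2 (X 1 ^ (2 * n)) (isHomogeneous_X_pow _ _)
    have a3 := h2 (X 1 ^ (2 * n - 1) * X 2) (by
      have := (isHomogeneous_X_pow (R := ℝ) (1 : Fin 3) (2 * n - 1)).mul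
        (isHomogeneous_X ℝ (2 : Fin 3))
      rwa [Nat.sub_add_cancel (by omega)] at this)
    simp [ev] at a1 a2 a3
    rcases a2 with a2 | a2
    · rw [a2, zero_mul] at a3; exact hz a3
    · rw [a2, mul_zero] at a1; exact one_ne_zero a1
  obtain ⟨hgh, hgl⟩ := hg
  have hg0 : g ≠ 0 := by rintro rfl; exact hpg (dvd_zero p)
  obtain ⟨a, b, u, hab, hpa, hgb⟩ := UniqueFactorizationMonoid.exists_reduced_factors p hp0 g
  obtain ⟨k, i, hki, hu, ha⟩ := hom_factor (u := u) (a := a) (hpa ▸ hp.1) (hpa ▸ hp0)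
  obtain ⟨k', j, hkj, hu', hb⟩ := hom_factor (u := u) (a := b) (hgb ▸ hgh) (hgb ▸ hg0)
  have hu0 : u ≠ 0 := by rintro rfl; rw [zero_mul] at hpa; exact hp0 hpa.symm
  have ha0 : a ≠ 0 := by rintro rfl; rw [mul_zero] at hpa; exact hp0 hpa.symm
  have hb0 : b ≠ 0 := by rintro rfl; rw [mul_zero] at hgb; exact hg0 hgb.symm
  obtain rfl : k' = k := hu'.inj_right hu hu0
  have hCu : ∀ c : ℝ, c ≠ 0 → IsUnit (C c : MvPolynomial (Fin 3) ℝ) :=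
    fun c hc => (isUnit_iff_ne_zero.2 hc).map C
  have hevu : ∀ x : Fin 3 → ℝ, x ≠ 0 → eval x u ≠ 0 ∧ eval x a ≠ 0 := by
    intro x hx
    have := hp.2 x hx
    rw [← hpa, map_mul] at this
    exact ⟨left_ne_zero_of_mul this, right_ne_zero_of_mul this⟩
  have hi : 1 ≤ i := by
    by_contra h
    obtain rfl : i = 0 := by omega
    obtain ⟨c, hc, rfl⟩ := hom_zero_unit ha ha0
    apply hpg
    rw [← hpa, ← hgb, (hCu c hc).mul_right_dvd]
    exact Dvd.intro _ rfl
  rcases Nat.eq_zero_or_pos k' with hk | hk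
  · subst hk
    obtain ⟨c, hc, rfl⟩ := hom_zero_unit hu hu0
    have hrel : IsRelPrime p g := by
      rw [← hpa, ← hgb, isRelPrime_mul_unit_left (hCu c hc)]
      exact hab
    exact core_relprime hn hmn hp.1 hgh hp.2 hrel l hne hpsd hkill hgl
  · -- u itself is in the ideal
    have hW : ∀ w, w.IsHomogeneous j → u * w ∈ WW n l := by
      intro w hw
      have huw : (u * w).IsHomogeneous n := hkj ▸ hu.mul hw
      apply WW_of_sq hpsd huw
      rcases Nat.eq_zero_or_pos j with hj | hj
      · subst hj
        obtain ⟨c, hc, rfl⟩ := hom_zero_unit hb hb0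
        have e : u * w = g * (C c⁻¹ * w) := by
          rw [← hgb]
          have : (C c * C c⁻¹ : MvPolynomial (Fin 3) ℝ) = 1 := by
            rw [← C_mul, mul_inv_cancel₀ hc, C_1]
          linear_combination (-u * w) * this
        rw [show u * w * (u * w) = g * ((C c⁻¹ * w) * (u * w)) by linear_combination (u * w) * e]
        apply hgl
        have := (((isHomogeneous_C (Fin 3) c⁻¹).mul hw).mul huw)
        simpa using this
      · by_contra hcon
        refine IH j (by omega) hj i a (l ∘ₗ LinearMap.mulLeft ℝ (u * u)) (by omega)
          ⟨ha, fun x hx => (hevu x hx).2⟩ ⟨⟨w * w, by rw [two_mul]; exact hw.mul hw, ?_⟩, ?_, ?_⟩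
        · rw [LinearMap.comp_apply, LinearMap.mulLeft_apply]
          rwa [show u * u * (w * w) = u * w * (u * w) by ring]
        · intro f hf
          rw [LinearMap.comp_apply, LinearMap.mulLeft_apply,
            show u * u * (f * f) = u * f * (u * f) by ring]
          exact hpsd _ (hkj ▸ hu.mul hf)
        · intro c q hc hq
          rw [LinearMap.comp_apply, LinearMap.mulLeft_apply,
            show u * u * (a * q) = (u * a) * (u * q) by ring, hpa]
          exact hkill (k' + c) _ (by omega) (hu.mul hq)
    refine hmin k' (by omega) ⟨by omega, u, l, ⟨hu, fun x hx => (hevu x hx).1⟩, hne, hpsd, ?_⟩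
    intro c q hc hq
    apply functional_span l u j n _ q (by rwa [show j + n = c by omega])
    intro f h hf hh
    rw [← mul_assoc]
    exact (hW f hf).2 h hh

/-- a positive Gorenstein ideal in `ℝ[x₁,x₂,x₃]` with socle `ℓ` of
degree `4d` contains no strictly positive form of degree `2d + 2`. -/
theorem stmt_9 (d : ℕ) (hd : 1 ≤ d) (l : MvPolynomial (Fin 3) ℝ →ₗ[ℝ] ℝ)
    (hne : ∃ f : MvPolynomial (Fin 3) ℝ, f.IsHomogeneous (4 * d) ∧ l f ≠ 0)
    (hpsd : ∀ f : MvPolynomial (Fin 3) ℝ, f.IsHomogeneous (2 * d) → 0 ≤ l (f ^ 2))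
    (p : MvPolynomial (Fin 3) ℝ) (hp : p.IsHomogeneous (2 * d + 2))
    (hpos : ∀ x : Fin 3 → ℝ, x ≠ 0 → 0 < eval x p) :
    ∃ q : MvPolynomial (Fin 3) ℝ, q.IsHomogeneous (2 * d - 2) ∧ l (p * q) ≠ 0 := by
  by_contra! hc
  refine main_false (2 * d) (by omega) (2 * d + 2) p l le_rfl ⟨hp, fun x hx => (hpos x hx).ne'⟩
    ⟨?_, ?_, ?_⟩
  · obtain ⟨f, hf, hlf⟩ := hne
    exact ⟨f, by rwa [show 2 * (2 * d) = 4 * d by omega], hlf⟩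
  · intro f hf
    have := hpsd f hf
    rwa [pow_two] at this
  · intro k q hk hq
    exact hc q (by rwa [show 2 * d - 2 = k by omega])
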